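/- arXiv:math/0412354 — 2 statements merged into one kernel-verified Lean document; each statement's English description precedes it below -/
import Mathlib

section
/- Every function H : ℂ → ℂ meromorphic on ℂ satisfying the functional equation H(z+1) = z·H(z) + 1/Γ(1−z) for every z ∈ ℂ at which H(z+1), H(z), and 1/Γ(1−z) are all analytic, is differentially transcendental. In particular, Hadamard's factorial function is differentially transcendental. -/
/-- A function `f : ℂ → ℂ` (meromorphic on `ℂ`) is differentially algebraic over `ℂ(z)`:
there are `n ∈ ℕ` and a nonzero polynomial `P ∈ ℂ[X₀, …, X_{n+1}]` such that
`P (z, f z, f' z, …, f⁽ⁿ⁾ z) = 0` at every point `z` where `f` is analytic. -/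
def DifferentiallyAlgebraic (f : ℂ → ℂ) : Prop :=
  ∃ (n : ℕ) (P : MvPolynomial (Fin (n + 2)) ℂ),
    P ≠ 0 ∧ ∀ z : ℂ, AnalyticAt ℂ f z →
      MvPolynomial.eval
        (fun i : Fin (n + 2) => if i.val = 0 then z else iteratedDeriv (i.val - 1) f z) P = 0

section
open Algebra

theorem HadAux.deriv_alg {k A : Type*} [Field k] [CharZero k] [CommRing A] [IsDomain A] [Algebra k A]
    (D : Derivation k A A) (s : Set A)
    (hs : ∀ x ∈ s, IsAlgebraic (adjoin k s) (D x)) (a : A)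
    (ha : IsAlgebraic (adjoin k s) a) : IsAlgebraic (adjoin k s) (D a) := by
  classical
  have hL : ∀ x ∈ adjoin k s, IsAlgebraic (adjoin k s) (D x) := by
    intro x hx
    induction hx using Algebra.adjoin_induction with
    | mem x hx => exact hs x hx
    | algebraMap r => simpa using isAlgebraic_zero
    | add x y hx hy h1 h2 => rw [map_add]; exact h1.add h2
    | mul x y hx hy h1 h2 =>
      rw [Derivation.leibniz]
      have e1 : IsAlgebraic (adjoin k s) x := isAlgebraic_algebraMap (⟨x, hx⟩ : adjoin k s)
      have e2 : IsAlgebraic (adjoin k s) y := isAlgebraic_algebraMap (⟨y, hy⟩ : adjoin k s)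
      exact (e1.mul h2).add (e2.mul h1)
  have key : ∀ q : Polynomial (adjoin k s), IsAlgebraic (adjoin k s)
      (D (Polynomial.aeval a q) - Polynomial.aeval a (Polynomial.derivative q) * D a) := by
    intro q
    induction q using Polynomial.induction_on' with
    | add p q hp hq =>
      have := hp.add hq
      simp only [map_add]
      convert this using 1
      ring
    | monomial n c =>
      have : IsAlgebraic (adjoin k s) (a ^ n * D (c : A)) := (ha.pow n).mul (hL c c.2)
      convert this using 1
      simp only [Polynomial.derivative_monomial, Polynomial.aeval_monomial, Derivation.leibniz,
        Derivation.leibniz_pow, smul_eq_mul, nsmul_eq_mul, map_mul, map_natCast]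
      simp only [Subalgebra.algebraMap_def, Algebra.algebraMap_self, RingHom.id_apply]
      ring
  have hex : ∃ n, ∃ p : Polynomial (adjoin k s), p ≠ 0 ∧ Polynomial.aeval a p = 0 ∧
      p.natDegree = n := by
    obtain ⟨p, h1, h2⟩ := ha
    exact ⟨_, p, h1, h2, rfl⟩
  obtain ⟨p, hp0, hpa, hpn⟩ := Nat.find_spec hex
  have hmin : ∀ q : Polynomial (adjoin k s), q ≠ 0 → q.natDegree < p.natDegree →
      Polynomial.aeval a q ≠ 0 := by
    intro q hq hlt h
    rw [hpn] at hlt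
    exact Nat.find_min hex hlt ⟨q, hq, h, rfl⟩
  have hpos : p.natDegree ≠ 0 := by
    intro h
    rw [Polynomial.eq_C_of_natDegree_eq_zero h] at hpa hp0
    simp only [Polynomial.aeval_C, Subalgebra.algebraMap_def] at hpa
    apply hp0
    have : p.coeff 0 = 0 := Subtype.ext hpa
    rw [this, map_zero]
  have : CharZero (adjoin k s) := charZero_of_injective_algebraMap (algebraMap k _).injective
  have hd0 : Polynomial.derivative p ≠ 0 := by
    intro h
    exact hpos (Polynomial.derivative_eq_zero.1 h)
  have hda := hmin _ hd0 (Polynomial.natDegree_derivative_lt hpos)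
  have h1 := key p
  rw [hpa, map_zero, zero_sub] at h1
  have h2 : IsAlgebraic (adjoin k s) (Polynomial.aeval a (Polynomial.derivative p) * D a) := by
    simpa using h1.neg
  have h3 : IsAlgebraic (adjoin k s) (Polynomial.aeval a (Polynomial.derivative p)) := by
    have : Polynomial.aeval a (Polynomial.derivative p) ∈
      (Subalgebra.algebraicClosure (adjoin k s) A) := by
      exact Algebra.adjoin_le (Set.singleton_subset_iff.2 ha)
        (Polynomial.aeval_mem_adjoin_singleton _ a)
    exact this
  exact IsAlgebraic.of_mul (mem_nonZeroDivisors_of_ne_zero hda) h3 h2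

theorem HadAux.finite_closure {k A : Type*} [Field k] [CharZero k] [CommRing A] [IsDomain A]
    [Algebra k A] (D : Derivation k A A) (z a : A) (hz : Transcendental k z) (hDz : D z = 1)
    (h : ¬ AlgebraicIndependent k (fun o : Option ℕ => o.elim z (fun i => D^[i] a))) :
    ∃ s : Set A, s.Finite ∧ (∀ i, D^[i] a ∈ (AlgebraicIndependent.matroid k A).closure s) ∧
      z ∈ (AlgebraicIndependent.matroid k A).closure s := by
  set x : Option ℕ → A := fun o : Option ℕ => o.elim z (fun i => D^[i] a) with hx
  let T : ℕ → Set (Option ℕ) := fun n => insert none (some '' Set.Iio n)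
  have hT : ∀ n, T (n+1) = insert (some n) (T n) := by
    intro n
    ext o
    cases o <;> simp [T]; omega
  have hTfin : ∀ n, (T n).Finite := fun n => ((Set.finite_Iio n).image _).insert _
  have hex : ∃ n, IsAlgebraic (adjoin k (x '' T n)) (x (some n)) := by
    by_contra hcon
    push Not at hcon
    have hind : ∀ n, AlgebraicIndepOn k x (T n) := by
      intro n
      induction n with
      | zero =>
        have : AlgebraicIndepOn k x (insert none (∅ : Set (Option ℕ))) := by
          apply AlgebraicIndepOn.insert
          · exact algebraicIndependent_empty_type_iff.mpr (algebraMap k A).injective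
          · rw [Set.image_empty, Algebra.adjoin_empty]
            intro h
            apply hz
            exact h.restrictScalars k
        simpa [T] using this
      | succ n ih =>
        rw [hT]
        exact ih.insert (hcon n)
    apply h
    apply algebraicIndependent_of_finite_type
    intro t ht
    obtain ⟨n, hn⟩ : ∃ n, t ⊆ T n := by
      obtain ⟨n, hn⟩ := (ht.preimage (Option.some_injective ℕ).injOn).bddAbove
      refine ⟨n + 1, ?_⟩
      intro o ho
      cases o with
      | none => simp [T]
      | some i => 
        have := hn (show i ∈ some ⁻¹' t from ho)
        simp [T]; omega
    exact (hind n).comp (Set.inclusion hn) (Set.inclusion_injective hn)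
  obtain ⟨n, hn⟩ := hex
  have hmem : ∀ y, y ∈ (AlgebraicIndependent.matroid k A).closure (x '' T n) ↔
      IsAlgebraic (adjoin k (x '' T n)) y := by
    intro y
    rw [AlgebraicIndependent.matroid_closure_eq]; rfl
  have hsub : ∀ y ∈ x '' T n, IsAlgebraic (adjoin k (x '' T n)) y := fun y hy =>
    isAlgebraic_algebraMap (⟨y, subset_adjoin hy⟩ : adjoin k (x '' T n))
  have hzm : IsAlgebraic (adjoin k (x '' T n)) z := hsub _ ⟨none, by simp [T], rfl⟩
  have hD := HadAux.deriv_alg D (x '' T n) (by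
    rintro _ ⟨o, ho, rfl⟩
    cases o with
    | none => 
      simp only [hx, Option.elim, hDz]
      exact isAlgebraic_one
    | some i =>
      have : D (x (some i)) = x (some (i+1)) := by
        simp only [hx, Option.elim, Function.iterate_succ_apply']
      rw [this]
      have hi : i < n := by simpa [T] using ho
      rcases eq_or_lt_of_le (Nat.succ_le_of_lt hi) with h | h
      · rw [← h] at hn; rw [← h]; exact hn
      · exact hsub _ ⟨some (i+1), by simpa [T] using h, rfl⟩)
  refine ⟨x '' T n, (hTfin n).image _, ?_, (hmem _).2 hzm⟩
  intro i
  rw [hmem]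
  induction i with
  | zero =>
    rcases Nat.eq_zero_or_pos n with h | h
    · have : IsAlgebraic (adjoin k (x '' T n)) (x (some 0)) := by rw [h] at hn ⊢; exact hn
      exact this
    · exact hsub _ ⟨some 0, by simpa [T] using h, rfl⟩
  | succ i ih =>
    rw [Function.iterate_succ_apply']
    exact hD _ ih

theorem HadAux.closure_sub {k A : Type*} [Field k] [CharZero k] [CommRing A] [IsDomain A]
    [Algebra k A] (D : Derivation k A A) (z a z' b : A) (hz : Transcendental k z) (hDz : D z = 1)
    (hz' : Transcendental k z') (hDz' : D z' = 1)
    (ha : ¬ AlgebraicIndependent k (fun o : Option ℕ => o.elim z (fun i => D^[i] a)))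
    (hb : ¬ AlgebraicIndependent k (fun o : Option ℕ => o.elim z' (fun i => D^[i] b))) :
    ¬ AlgebraicIndependent k (fun o : Option ℕ => o.elim z (fun i => D^[i] (b - z * a))) := by
  obtain ⟨s, hs, has, hzs⟩ := HadAux.finite_closure D z a hz hDz ha
  obtain ⟨t, ht, hbt, hzt⟩ := HadAux.finite_closure D z' b hz' hDz' hb
  intro hind
  set M := AlgebraicIndependent.matroid k A
  have hmem : ∀ y, y ∈ M.closure (s ∪ t) ↔ IsAlgebraic (adjoin k (s ∪ t)) y := by
    intro y
    rw [AlgebraicIndependent.matroid_closure_eq]; rfl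
  have h1 : M.closure s ⊆ M.closure (s ∪ t) := M.closure_subset_closure Set.subset_union_left
  have h2 : M.closure t ⊆ M.closure (s ∪ t) := M.closure_subset_closure Set.subset_union_right
  have hDf : ∀ i, ∃ m : ℕ, D^[i] (b - z * a) = D^[i] b - z * D^[i] a - m * D^[i-1] a := by
    intro i
    induction i with
    | zero => exact ⟨0, by simp⟩
    | succ i ih =>
      obtain ⟨m, hm⟩ := ih
      rcases Nat.eq_zero_or_pos i with h | h
      · subst h
        refine ⟨1, ?_⟩
        simp [hDz]
        ring
      · obtain ⟨j, rfl⟩ : ∃ j, i = j + 1 := ⟨i - 1, by omega⟩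
        refine ⟨m + 1, ?_⟩
        rw [Function.iterate_succ_apply', hm]
        simp only [map_sub, Derivation.leibniz, smul_eq_mul, hDz, Derivation.map_natCast,
          Function.iterate_succ_apply', Nat.add_sub_cancel]
        push_cast
        ring
  have hr : Set.range (fun o : Option ℕ => o.elim z (fun i => D^[i] (b - z * a))) ⊆
      M.closure (s ∪ t) := by
    rintro _ ⟨o, rfl⟩
    cases o with
    | none => exact h1 hzs
    | some i =>
      obtain ⟨m, hm⟩ := hDf i
      simp only [Option.elim]
      rw [hm, hmem]
      have e1 := (hmem _).1 (h1 hzs)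
      have e2 := fun i => (hmem _).1 (h1 (has i))
      have e3 := fun i => (hmem _).1 (h2 (hbt i))
      exact ((e3 i).sub (e1.mul (e2 i))).sub ((isAlgebraic_natCast m).mul (e2 _))
  have hI : M.Indep (Set.range (fun o : Option ℕ => o.elim z (fun i => D^[i] (b - z * a)))) :=
    AlgebraicIndependent.coe_range hind
  have hc : (Set.range (fun o : Option ℕ => o.elim z (fun i => D^[i] (b - z * a)))).encard ≤
      (s ∪ t).encard := by
    rw [← hI.eRk_eq_encard]
    exact (M.eRk_mono hr).trans ((M.eRk_closure_eq _).le.trans (M.eRk_le_encard _))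
  have hinf : (Set.range (fun o : Option ℕ => o.elim z (fun i => D^[i] (b - z * a)))).Infinite :=
    Set.infinite_range_of_injective hind.injective
  rw [hinf.encard_eq, top_le_iff, Set.encard_eq_top_iff] at hc
  exact hc (hs.union ht)

end

/-- Taylor series of `f` at `c`. -/
noncomputable def HadAux.T (c : ℂ) (f : ℂ → ℂ) : PowerSeries ℂ :=
  PowerSeries.mk fun n => iteratedDeriv n f c / (n.factorial : ℂ)

namespace HadAux

theorem T_congr {c : ℂ} {f g : ℂ → ℂ} (h : f =ᶠ[nhds c] g) : T c f = T c g := by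
  ext n
  simp only [T, PowerSeries.coeff_mk]
  rw [h.iteratedDeriv_eq n]

theorem T_const (c a : ℂ) : T c (fun _ => a) = PowerSeries.C a := by
  ext n
  simp only [T, PowerSeries.coeff_mk, iteratedDeriv_const, PowerSeries.coeff_C]
  split_ifs with h <;> simp [h]

theorem T_add {c : ℂ} {f g : ℂ → ℂ} (hf : AnalyticAt ℂ f c) (hg : AnalyticAt ℂ g c) :
    T c (fun z => f z + g z) = T c f + T c g := by
  ext n
  simp only [T, PowerSeries.coeff_mk, map_add]
  rw [iteratedDeriv_fun_add hf.contDiffAt hg.contDiffAt, add_div]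

theorem T_mul {c : ℂ} {f g : ℂ → ℂ} (hf : AnalyticAt ℂ f c) (hg : AnalyticAt ℂ g c) :
    T c (fun z => f z * g z) = T c f * T c g := by
  ext n
  simp only [T, PowerSeries.coeff_mk, PowerSeries.coeff_mul]
  rw [iteratedDeriv_fun_mul hf.contDiffAt hg.contDiffAt, Finset.Nat.sum_antidiagonal_eq_sum_range_succ
    (fun i j => iteratedDeriv i f c / (i.factorial : ℂ) * (iteratedDeriv j g c / (j.factorial : ℂ))),
    Finset.sum_div]
  apply Finset.sum_congr rfl
  intro i hi
  have hi' : i ≤ n := by simpa [Nat.lt_succ_iff] using hi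
  rw [Nat.cast_choose ℂ hi']
  have h1 : (n.factorial : ℂ) ≠ 0 := by exact_mod_cast n.factorial_ne_zero
  have h2 : (i.factorial : ℂ) ≠ 0 := by exact_mod_cast i.factorial_ne_zero
  have h3 : ((n - i).factorial : ℂ) ≠ 0 := by exact_mod_cast (n - i).factorial_ne_zero
  field_simp

theorem T_deriv (c : ℂ) (f : ℂ → ℂ) : PowerSeries.derivative ℂ (T c f) = T c (deriv f) := by
  ext n
  simp only [T, PowerSeries.coeff_mk, PowerSeries.coeff_derivative]
  rw [← iteratedDeriv_succ', Nat.factorial_succ]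
  have h1 : (n.factorial : ℂ) ≠ 0 := by exact_mod_cast n.factorial_ne_zero
  have h2 : (n : ℂ) + 1 ≠ 0 := by exact_mod_cast n.succ_ne_zero
  push_cast
  field_simp

theorem T_iteratedDeriv (c : ℂ) (f : ℂ → ℂ) (i : ℕ) :
    (PowerSeries.derivative ℂ)^[i] (T c f) = T c (iteratedDeriv i f) := by
  induction i with
  | zero => simp
  | succ i ih => rw [Function.iterate_succ_apply', ih, T_deriv, iteratedDeriv_succ]

theorem T_eq_zero {c : ℂ} {f : ℂ → ℂ} (hf : AnalyticAt ℂ f c) (h : T c f = 0) :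
    ∀ᶠ z in nhds c, f z = 0 := by
  have h1 := hf.hasFPowerSeriesAt
  have h2 : (fun n ↦ iteratedDeriv n f c / (n.factorial : ℂ)) = 0 := by
    funext n
    have := congrArg (PowerSeries.coeff n) h
    simpa only [T, PowerSeries.coeff_mk, map_zero, Pi.zero_apply] using this
  rw [h2] at h1
  have h3 : FormalMultilinearSeries.ofScalars ℂ (0 : ℕ → ℂ) =
      (0 : FormalMultilinearSeries ℂ ℂ ℂ) := by
    ext n
    simp [FormalMultilinearSeries.ofScalars]
  rw [h3] at h1
  exact h1.eventually_eq_zero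

theorem analyticAt_iter {c : ℂ} {f : ℂ → ℂ} (hf : AnalyticAt ℂ f c) (i : ℕ) :
    AnalyticAt ℂ (iteratedDeriv i f) c := by
  rw [iteratedDeriv_eq_iterate]
  exact hf.iterated_deriv i

theorem T_aeval {ι : Type*} {c : ℂ} (x : ι → ℂ → ℂ) (hx : ∀ i, AnalyticAt ℂ (x i) c)
    (P : MvPolynomial ι ℂ) :
    AnalyticAt ℂ (fun z => MvPolynomial.aeval (fun i => x i z) P) c ∧
      T c (fun z => MvPolynomial.aeval (fun i => x i z) P) =
        MvPolynomial.aeval (fun i => T c (x i)) P := by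
  induction P using MvPolynomial.induction_on with
  | C a =>
    simp only [MvPolynomial.aeval_C, Algebra.algebraMap_self, RingHom.id_apply]
    exact ⟨analyticAt_const, T_const _ _⟩
  | add p q hp hq =>
    simp only [map_add]
    exact ⟨hp.1.add hq.1, by rw [T_add hp.1 hq.1, hp.2, hq.2]⟩
  | mul_X p i hp =>
    simp only [map_mul, MvPolynomial.aeval_X]
    exact ⟨hp.1.mul (hx i), by rw [T_mul hp.1 (hx i), hp.2]⟩

theorem T_transcendental (c b : ℂ) : Transcendental ℂ (T c (fun z => z + b)) := by
  rw [← algebraicIndependent_iff_transcendental, algebraicIndependent_iff]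
  intro p hp
  have h := T_aeval (c := c) (ι := Fin 1) (fun _ z => z + b)
    (fun _ => analyticAt_id.add analyticAt_const) p
  have e : (fun _ : Fin 1 => T c (fun z => z + b)) = ![T c fun z => z + b] := by
    ext i; fin_cases i; rfl
  rw [e, hp] at h
  have h0 := T_eq_zero h.1 h.2
  have h1 : AnalyticOnNhd ℂ (fun z : ℂ => MvPolynomial.aeval (fun _ : Fin 1 => z + b) p)
      Set.univ := fun z _ => (T_aeval (c := z) (ι := Fin 1) (fun _ z => z + b)
    (fun _ => analyticAt_id.add analyticAt_const) p).1
  have h2 := h1.eq_of_eventuallyEq (analyticOnNhd_const (v := 0)) h0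
  apply MvPolynomial.funext
  intro x
  have := congrFun h2 (x 0 - b)
  simp only [sub_add_cancel] at this
  rw [map_zero, ← this, MvPolynomial.aeval_eq_eval]
  congr 2
  funext i; fin_cases i; rfl

theorem T_deriv_z (c b : ℂ) : PowerSeries.derivative ℂ (T c (fun z => z + b)) = 1 := by
  rw [T_deriv]
  have : deriv (fun z : ℂ => z + b) = fun _ => 1 := by funext z; simp
  rw [this, T_const, map_one]

theorem dep_of_eval {c b : ℂ} {f : ℂ → ℂ} (hf : AnalyticAt ℂ f c) (n : ℕ)
    (P : MvPolynomial (Fin (n + 2)) ℂ) (hP : P ≠ 0)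
    (h : ∀ᶠ z in nhds c, MvPolynomial.eval
        (fun i : Fin (n + 2) => if i.val = 0 then z + b else iteratedDeriv (i.val - 1) f z) P = 0) :
    ¬ AlgebraicIndependent ℂ (fun o : Option ℕ => o.elim (T c (fun z => z + b))
      (fun i => (PowerSeries.derivative ℂ)^[i] (T c f))) := by
  intro hind
  let e : Fin (n + 2) → Option ℕ := fun i => if i.val = 0 then none else some (i.val - 1)
  have he : Function.Injective e := by
    intro i j hij
    simp only [e] at hij
    apply Fin.ext
    split_ifs at hij with h1 h2 h3
    · omega
    · simp only [Option.some.injEq] at hij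
      omega
  have h1 := hind.comp e he
  rw [algebraicIndependent_iff] at h1
  apply hP
  apply h1
  let x : Fin (n + 2) → ℂ → ℂ := fun i => if i.val = 0 then (fun z => z + b) else
    iteratedDeriv (i.val - 1) f
  have hx : ∀ i, AnalyticAt ℂ (x i) c := by
    intro i
    simp only [x]
    split_ifs
    · exact analyticAt_id.add analyticAt_const
    · exact analyticAt_iter hf _
  have h2 := (T_aeval x hx P).2
  have h3 : ((fun o : Option ℕ => o.elim (T c (fun z => z + b))
      (fun i => (PowerSeries.derivative ℂ)^[i] (T c f))) ∘ e) = fun i => T c (x i) := by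
    funext i
    simp only [Function.comp, e, x]
    split_ifs
    · rfl
    · simp only [Option.elim, T_iteratedDeriv]
  rw [h3, ← h2]
  have h4 : (fun z => MvPolynomial.aeval (fun i => x i z) P) =ᶠ[nhds c] fun _ => (0 : ℂ) := by
    filter_upwards [h] with z hz
    rw [← hz, MvPolynomial.aeval_eq_eval]
    congr 2
    funext i
    simp only [x]
    split_ifs <;> rfl
  rw [T_congr h4, T_const, map_zero]

theorem eval_of_dep {c : ℂ} {g : ℂ → ℂ} (hg : Differentiable ℂ g)
    (h : ¬ AlgebraicIndependent ℂ (fun o : Option ℕ => o.elim (T c (fun z => z + 0))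
      (fun i => (PowerSeries.derivative ℂ)^[i] (T c g)))) :
    ∃ P : MvPolynomial (Option ℕ) ℂ, P ≠ 0 ∧
      ∀ z, MvPolynomial.aeval (fun o : Option ℕ => o.elim z (fun i => iteratedDeriv i g z)) P
        = 0 := by
  rw [algebraicIndependent_iff] at h
  push Not at h
  obtain ⟨P, hP, hP0⟩ := h
  refine ⟨P, hP0, ?_⟩
  let x : Option ℕ → ℂ → ℂ := fun o z => o.elim (z + 0) (fun i => iteratedDeriv i g z)
  have hx : ∀ o c, AnalyticAt ℂ (x o) c := by
    intro o c
    cases o with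
    | none => exact analyticAt_id.add analyticAt_const
    | some i => exact analyticAt_iter (hg.analyticAt c) _
  have h1 := T_aeval (c := c) x (fun o => hx o c) P
  have h3 : (fun o : Option ℕ => o.elim (T c (fun z => z + 0))
      (fun i => (PowerSeries.derivative ℂ)^[i] (T c g))) = fun i => T c (x i) := by
    funext o
    cases o with
    | none => rfl
    | some i => simp only [Option.elim, T_iteratedDeriv]; rfl
  rw [← h3, hP] at h1
  have h0 := T_eq_zero h1.1 h1.2
  have h2 : AnalyticOnNhd ℂ (fun z : ℂ => MvPolynomial.aeval (fun o => x o z) P)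
      Set.univ := fun z _ => (T_aeval (c := z) x (fun o => hx o z) P).1
  have h4 := h2.eq_of_eventuallyEq (analyticOnNhd_const (v := 0)) h0
  intro z
  have := congrFun h4 z
  simpa only [x, add_zero] using this

end HadAux

namespace HadAux

open MvPolynomial in
/-- The substitution `Y_i ↦ c Y_i + d_i Y_{i-1}` on polynomials in `Y_0, Y_1, …`. -/
noncomputable def gen {R : Type*} [CommRing R] (c : R) (d : ℕ → R) (i : ℕᵒᵈ) :
    MvPolynomial ℕᵒᵈ R :=
  C c * X i + C (d (OrderDual.ofDual i)) * X (OrderDual.toDual (OrderDual.ofDual i - 1))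

open MvPolynomial in
/-- The substitution `Y_i ↦ c Y_i + d_i Y_{i-1}` as an algebra map. -/
noncomputable def L {R : Type*} [CommRing R] (c : R) (d : ℕ → R) :
    MvPolynomial ℕᵒᵈ R →ₐ[R] MvPolynomial ℕᵒᵈ R := aeval (gen c d)

/-- The lexicographic order with `Y_0 < Y_1 < …`. -/
noncomputable abbrev mo : MonomialOrder ℕᵒᵈ := MonomialOrder.lex

theorem single_lt (i : ℕ) (hi : i ≠ 0) :
    mo.toSyn (Finsupp.single (OrderDual.toDual (i - 1)) 1) <
      mo.toSyn (Finsupp.single (OrderDual.toDual i) 1) := by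
  rw [MonomialOrder.lex_lt_iff, Finsupp.Lex.single_lt_iff]
  rw [OrderDual.toDual_lt_toDual]
  omega

open MvPolynomial in
theorem gen_props {R : Type*} [CommRing R] [IsDomain R] {c : R} (hc : c ≠ 0) {d : ℕ → R}
    (hd : d 0 = 0) (i : ℕᵒᵈ) : gen c d i ≠ 0 ∧ mo.degree (gen c d i) = Finsupp.single i 1 ∧
      mo.leadingCoeff (gen c d i) = c := by
  classical
  have h1 : mo.degree (C c * X i : MvPolynomial ℕᵒᵈ R) = Finsupp.single i 1 := by
    rw [C_mul_X_eq_monomial, MonomialOrder.degree_monomial, if_neg hc]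
  have h2 : mo.leadingCoeff (C c * X i : MvPolynomial ℕᵒᵈ R) = c := by
    rw [C_mul_X_eq_monomial, MonomialOrder.leadingCoeff_monomial]
  suffices h : mo.degree (gen c d i) = Finsupp.single i 1 ∧ mo.leadingCoeff (gen c d i) = c by
    refine ⟨?_, h⟩
    intro h0
    rw [h0, MonomialOrder.leadingCoeff_zero] at h
    exact hc h.2.symm
  by_cases hi : OrderDual.ofDual i = 0
  · unfold gen
    rw [hi, hd, map_zero, zero_mul, add_zero]
    exact ⟨h1, h2⟩
  · have hlt : mo.toSyn (mo.degree (C (d (OrderDual.ofDual i)) *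
        X (OrderDual.toDual (OrderDual.ofDual i - 1)) : MvPolynomial ℕᵒᵈ R)) <
        mo.toSyn (mo.degree (C c * X i : MvPolynomial ℕᵒᵈ R)) := by
      rw [h1, C_mul_X_eq_monomial]
      exact lt_of_le_of_lt (MonomialOrder.degree_monomial_le _) (single_lt _ hi)
    unfold gen
    rw [MonomialOrder.degree_add_of_lt hlt, MonomialOrder.leadingCoeff_add_of_lt hlt]
    exact ⟨h1, h2⟩

open MvPolynomial in
theorem prod_props {R : Type*} [CommRing R] [IsDomain R] {c : R} (hc : c ≠ 0) {d : ℕ → R}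
    (hd : d 0 = 0) (m : ℕᵒᵈ →₀ ℕ) :
    (m.prod fun i k => gen c d i ^ k) ≠ 0 ∧ mo.degree (m.prod fun i k => gen c d i ^ k) = m ∧
      mo.leadingCoeff (m.prod fun i k => gen c d i ^ k) = c ^ m.degree := by
  classical
  induction m using Finsupp.induction_linear with
  | zero => simp
  | add m n hm hn =>
    rw [Finsupp.prod_add_index' (by simp) (by intros; rw [pow_add])]
    refine ⟨mul_ne_zero hm.1 hn.1, ?_, ?_⟩
    · rw [MonomialOrder.degree_mul hm.1 hn.1, hm.2.1, hn.2.1]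
    · rw [MonomialOrder.leadingCoeff_mul, hm.2.2, hn.2.2, ← pow_add, map_add]
  | single i k =>
    obtain ⟨h1, h2, h3⟩ := gen_props hc hd i
    rw [Finsupp.prod_single_index (by simp)]
    refine ⟨pow_ne_zero _ h1, ?_, ?_⟩
    · rw [MonomialOrder.degree_pow, h2]; simp
    · rw [MonomialOrder.leadingCoeff_pow, h3]; simp

open MvPolynomial in
theorem L_top {R : Type*} [CommRing R] [IsDomain R] {c : R} (hc : c ≠ 0) {d : ℕ → R}
    (hd : d 0 = 0) (P : MvPolynomial ℕᵒᵈ R) :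
    mo.toSyn (mo.degree (L c d P)) ≤ mo.toSyn (mo.degree P) ∧
    coeff (mo.degree P) (L c d P) = mo.leadingCoeff P * c ^ (mo.degree P).degree := by
  classical
  have hsum : L c d P = ∑ m ∈ P.support,
      (C (coeff m P) * (m.prod fun i k => gen c d i ^ k)) := by
    conv_lhs => rw [P.as_sum]
    rw [map_sum]
    apply Finset.sum_congr rfl
    intro m _
    rw [L, aeval_monomial]
    rfl
  have hdeg : ∀ m ∈ P.support, mo.degree (C (coeff m P) * (m.prod fun i k => gen c d i ^ k)) = m := by
    intro m hm
    have hp := prod_props hc hd m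
    rw [MonomialOrder.degree_mul _ hp.1, MonomialOrder.degree_C, zero_add, hp.2.1]
    rw [mem_support_iff] at hm
    simpa using hm
  constructor
  · rw [hsum]
    refine MonomialOrder.degree_sum_le.trans ?_
    apply Finset.sup_le
    intro m hm
    rw [hdeg m hm]
    exact mo.le_degree hm
  · by_cases hP : P = 0
    · simp [hP]
    rw [hsum, coeff_sum, Finset.sum_eq_single (mo.degree P)]
    · have hp := prod_props hc hd (mo.degree P)
      rw [coeff_C_mul]
      congr 1
      rw [← hp.2.2, MonomialOrder.leadingCoeff, hp.2.1]
    · intro m hm hne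
      apply MonomialOrder.coeff_eq_zero_of_lt (m := mo)
      rw [hdeg m hm]
      exact lt_of_le_of_ne (mo.le_degree hm) (fun h => hne (mo.toSyn.injective h))
    · intro h
      exact absurd (mo.degree_mem_support hP) h

theorem L_inj {R : Type*} [CommRing R] [IsDomain R] {c : R} (hc : c ≠ 0) {d : ℕ → R}
    (hd : d 0 = 0) (P : MvPolynomial ℕᵒᵈ R) (h : L c d P = 0) : P = 0 := by
  have := (L_top hc hd P).2
  rw [h, MvPolynomial.coeff_zero] at this
  by_contra hP
  exact mul_ne_zero (MonomialOrder.leadingCoeff_ne_zero_iff.2 hP) (pow_ne_zero _ hc) this.symm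

/-- The substitution `Y_0 ↦ 0`. -/
noncomputable def e0 (R : Type*) [CommRing R] : MvPolynomial ℕᵒᵈ R →ₐ[R] MvPolynomial ℕᵒᵈ R :=
  MvPolynomial.aeval (fun i => if OrderDual.ofDual i = 0 then 0 else MvPolynomial.X i)

open MvPolynomial in
theorem dvd_of_e0 {R : Type*} [CommRing R] (P : MvPolynomial ℕᵒᵈ R) (h : e0 R P = 0) :
    X (OrderDual.toDual 0) ∣ P := by
  have key : ((Ideal.Quotient.mkₐ R (Ideal.span {(X (OrderDual.toDual 0) :
      MvPolynomial ℕᵒᵈ R)})).comp (e0 R)) = Ideal.Quotient.mkₐ R (Ideal.span {(X (OrderDual.toDual 0) :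
      MvPolynomial ℕᵒᵈ R)}) := by
    apply MvPolynomial.algHom_ext
    intro i
    simp only [AlgHom.comp_apply, e0, aeval_X]
    split_ifs with hi
    · symm
      rw [Ideal.Quotient.mkₐ_eq_mk, Ideal.Quotient.eq, sub_zero, Ideal.mem_span_singleton]
      have : i = OrderDual.toDual 0 := hi
      rw [this]
    · rfl
  have h1 := DFunLike.congr_fun key P
  rw [AlgHom.comp_apply, h] at h1
  have h2 := h1.symm
  rw [Ideal.Quotient.mkₐ_eq_mk, Ideal.Quotient.eq, sub_zero, Ideal.mem_span_singleton] at h2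
  exact h2

open MvPolynomial in
theorem e0_L {R : Type*} [CommRing R] (c : R) (d : ℕ → R) (hd : d 0 = 0) (P : MvPolynomial ℕᵒᵈ R) :
    e0 R (L c d P) = L c (fun i => if i ≤ 1 then 0 else d i) (e0 R P) := by
  have key : (e0 R).comp (L c d) = (L c (fun i => if i ≤ 1 then 0 else d i)).comp (e0 R) := by
    apply MvPolynomial.algHom_ext
    intro i
    obtain ⟨j, rfl⟩ := OrderDual.toDual.surjective i
    simp only [AlgHom.comp_apply, e0, L, aeval_X, gen, map_add, map_mul, algHom_C,
      MvPolynomial.algebraMap_eq, OrderDual.ofDual_toDual]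
    rcases j with _ | _ | j
    · simp [hd]
    · simp [gen]
    · simp [gen]
  exact DFunLike.congr_fun key P

open MvPolynomial in
/-- The case `c = 0`. -/
theorem e0_of_L_zero (P : MvPolynomial ℕᵒᵈ ℂ) (h : L 0 (fun i => -(i : ℂ)) P = 0) :
    e0 ℂ P = 0 := by
  have key : (aeval (fun i : ℕᵒᵈ => C (-(1 / ((OrderDual.ofDual i : ℕ) + 1 : ℂ))) *
      X (OrderDual.toDual (OrderDual.ofDual i + 1))) :
        MvPolynomial ℕᵒᵈ ℂ →ₐ[ℂ] MvPolynomial ℕᵒᵈ ℂ).comp (L 0 (fun i => -(i : ℂ))) = e0 ℂ := by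
    apply MvPolynomial.algHom_ext
    intro i
    obtain ⟨j, rfl⟩ := OrderDual.toDual.surjective i
    simp only [AlgHom.comp_apply, e0, L, aeval_X, gen, map_add, map_mul, algHom_C,
      MvPolynomial.algebraMap_eq, OrderDual.ofDual_toDual]
    rcases j with _ | j
    · simp
    · have hne : (j : ℂ) + 1 ≠ 0 := by exact_mod_cast j.succ_ne_zero
      simp only [map_zero, zero_mul, zero_add, OrderDual.ofDual_toDual, Nat.add_sub_cancel]
      rw [← mul_assoc, ← C_mul]
      have : -((j + 1 : ℕ) : ℂ) * -(1 / ((j : ℂ) + 1)) = 1 := by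
        push_cast
        field_simp
      rw [this, C_1, one_mul]
      exact (if_neg (Nat.succ_ne_zero j)).symm
  rw [← key, AlgHom.comp_apply, h, map_zero]

/-- Evaluation at `z` and the derivatives of `g` at `z`. -/
noncomputable def ev (g : ℂ → ℂ) (z : ℂ) : MvPolynomial ℕᵒᵈ (Polynomial ℂ) →+* ℂ :=
  MvPolynomial.eval₂Hom (Polynomial.evalRingHom z)
    (fun i => iteratedDeriv (OrderDual.ofDual i) g z)

/-- The shift operator. -/
noncomputable def S : MvPolynomial ℕᵒᵈ (Polynomial ℂ) →+* MvPolynomial ℕᵒᵈ (Polynomial ℂ) :=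
  (L (-Polynomial.X : Polynomial ℂ) (fun i => -(i : Polynomial ℂ)) : _ →+* _).comp
    (MvPolynomial.map (Polynomial.compRingHom (Polynomial.X + 1)))

theorem iter_shift (g : ℂ → ℂ) (hg : Differentiable ℂ g) (hfe : ∀ z, g (z + 1) = -z * g z)
    (i : ℕ) : ∀ z, iteratedDeriv i g (z + 1) =
      -z * iteratedDeriv i g z + -(i : ℂ) * iteratedDeriv (i - 1) g z := by
  have hd : ∀ i, Differentiable ℂ (iteratedDeriv i g) := fun i z =>
    (analyticAt_iter (hg.analyticAt z) i).differentiableAt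
  induction i with
  | zero => intro z; simp [hfe]
  | succ i ih =>
    intro z
    have h1 : iteratedDeriv (i + 1) g (z + 1) = deriv (fun w => iteratedDeriv i g (w + 1)) z := by
      rw [iteratedDeriv_succ, deriv_comp_add_const]
    have hD : ∀ j w, HasDerivAt (iteratedDeriv j g) (iteratedDeriv (j + 1) g w) w := by
      intro j w
      rw [iteratedDeriv_succ]
      exact (hd j w).hasDerivAt
    rw [h1, funext ih]
    have h2 := ((hasDerivAt_id z).neg.mul (hD i z)).add
      ((hD (i - 1) z).const_mul (-(i : ℂ)))
    have h3 := h2.deriv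
    have h4 : (fun w => -w * iteratedDeriv i g w + -(i : ℂ) * iteratedDeriv (i - 1) g w) =
      ((-_root_.id * iteratedDeriv i g) + fun y => -(i : ℂ) * iteratedDeriv (i - 1) g y) := by
      funext w; simp
    rw [h4, h3]
    rcases i with _ | i
    · simp; ring
    · simp only [Nat.add_sub_cancel, Pi.neg_apply, _root_.id]
      push_cast
      ring

open MvPolynomial in
theorem ev_S (g : ℂ → ℂ) (hg : Differentiable ℂ g) (hfe : ∀ z, g (z + 1) = -z * g z) (z : ℂ)
    (P : MvPolynomial ℕᵒᵈ (Polynomial ℂ)) : ev g z (S P) = ev g (z + 1) P := by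
  have key : (ev g z).comp S = ev g (z + 1) := by
    apply MvPolynomial.ringHom_ext
    · intro p
      simp [ev, S]
    · intro i
      simp [ev, S, L, gen, iter_shift g hg hfe]
  exact DFunLike.congr_fun key P

open MvPolynomial in
theorem map_S (α : ℂ) (P : MvPolynomial ℕᵒᵈ (Polynomial ℂ)) :
    map (Polynomial.evalRingHom α) (S P) =
      L (-α) (fun i => -(i : ℂ)) (map (Polynomial.evalRingHom (α + 1)) P) := by
  have key : (map (Polynomial.evalRingHom α)).comp S =
      (L (-α) (fun i => -(i : ℂ)) : _ →+* _).comp (map (Polynomial.evalRingHom (α + 1))) := by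
    apply MvPolynomial.ringHom_ext
    · intro p
      simp [S]
    · intro i
      simp [S, L, gen]
  exact DFunLike.congr_fun key P

theorem ev_analytic (g : ℂ → ℂ) (hg : Differentiable ℂ g)
    (P : MvPolynomial ℕᵒᵈ (Polynomial ℂ)) : AnalyticOnNhd ℂ (fun z => ev g z P) Set.univ := by
  intro c _
  induction P using MvPolynomial.induction_on with
  | C p =>
    simp only [ev, MvPolynomial.coe_eval₂Hom, MvPolynomial.eval₂_C, Polynomial.coe_evalRingHom]
    exact p.differentiable.analyticAt c
  | add p q hp hq =>
    simp only [map_add]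
    exact hp.fun_add hq
  | mul_X p i hp =>
    simp only [map_mul]
    refine hp.fun_mul ?_
    simp only [ev, MvPolynomial.coe_eval₂Hom, MvPolynomial.eval₂_X]
    exact analyticAt_iter (hg.analyticAt c) _

theorem ev_mul_cancel (g : ℂ → ℂ) (hg : Differentiable ℂ g)
    (P Q : MvPolynomial ℕᵒᵈ (Polynomial ℂ)) (h : ∀ z, ev g z (P * Q) = 0)
    (hP : ∃ z, ev g z P ≠ 0) : ∀ z, ev g z Q = 0 := by
  have := AnalyticOnNhd.eq_zero_or_eq_zero_of_mul_eq_zero (ev_analytic g hg P)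
    (ev_analytic g hg Q) (fun z _ => by rw [← map_mul]; exact h z) isPreconnected_univ
  rcases this with h1 | h1
  · obtain ⟨z, hz⟩ := hP
    exact absurd (h1 z (Set.mem_univ _)) hz
  · exact fun z => h1 z (Set.mem_univ _)

open MvPolynomial in
theorem S_top (P : MvPolynomial ℕᵒᵈ (Polynomial ℂ)) :
    mo.toSyn (mo.degree (S P)) ≤ mo.toSyn (mo.degree P) ∧
    coeff (mo.degree P) (S P) = (mo.leadingCoeff P).comp (Polynomial.X + 1) *
      (-Polynomial.X) ^ (mo.degree P).degree := by
  have hinj : Function.Injective (Polynomial.compRingHom (Polynomial.X + 1 : Polynomial ℂ)) := by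
    rw [injective_iff_map_eq_zero]
    intro p hp
    have : (p.comp (Polynomial.X + 1)).comp (Polynomial.X - 1) = 0 := by
      have : p.comp (Polynomial.X + 1) = 0 := hp
      rw [this, Polynomial.zero_comp]
    rw [Polynomial.comp_assoc] at this
    simpa using this
  have hsupp : (map (Polynomial.compRingHom (Polynomial.X + 1 : Polynomial ℂ)) P).support
      = P.support := MvPolynomial.support_map_of_injective P hinj
  have hdeg : mo.degree (map (Polynomial.compRingHom (Polynomial.X + 1 : Polynomial ℂ)) P)
      = mo.degree P := by
    unfold MonomialOrder.degree
    rw [hsupp]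
  have := L_top (c := (-Polynomial.X : Polynomial ℂ)) (neg_ne_zero.2 Polynomial.X_ne_zero)
    (d := fun i => -(i : Polynomial ℂ)) (by simp)
    (map (Polynomial.compRingHom (Polynomial.X + 1 : Polynomial ℂ)) P)
  rw [MonomialOrder.leadingCoeff, hdeg, coeff_map] at this
  exact this

open MvPolynomial in
theorem hoelder_core (g : ℂ → ℂ) (hg : Differentiable ℂ g) (hg0 : g ≠ 0)
    (hfe : ∀ z, g (z + 1) = -z * g z) (P₀ : MvPolynomial ℕᵒᵈ (Polynomial ℂ))
    (hP₀ : ∀ z, ev g z P₀ = 0) : P₀ = 0 := by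
  classical
  by_contra hne
  let f : MvPolynomial ℕᵒᵈ (Polynomial ℂ) → mo.syn ×ₗ ℕ := fun Q =>
    toLex (mo.toSyn (mo.degree Q), (mo.leadingCoeff Q).natDegree)
  obtain ⟨P, ⟨hP, hPA⟩, hmin⟩ := WellFounded.has_min
    (InvImage.wf f (wellFounded_lt (α := mo.syn ×ₗ ℕ)))
    {Q | Q ≠ 0 ∧ ∀ z, ev g z Q = 0} ⟨P₀, hne, hP₀⟩
  have hmin1 : ∀ Q, (∀ z, ev g z Q = 0) → mo.toSyn (mo.degree Q) < mo.toSyn (mo.degree P) →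
      Q = 0 := by
    intro Q hQ hlt
    by_contra hQ0
    refine hmin Q ⟨hQ0, hQ⟩ ?_
    simp only [InvImage, f, Prod.Lex.toLex_lt_toLex]
    exact Or.inl hlt
  have hmin2 : ∀ Q, (∀ z, ev g z Q = 0) → mo.degree Q = mo.degree P →
      (mo.leadingCoeff Q).natDegree < (mo.leadingCoeff P).natDegree → Q = 0 := by
    intro Q hQ heq hlt
    by_contra hQ0
    refine hmin Q ⟨hQ0, hQ⟩ ?_
    simp only [InvImage, f, Prod.Lex.toLex_lt_toLex]
    exact Or.inr ⟨by rw [heq], hlt⟩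
  clear hmin
  set a := mo.leadingCoeff P with ha
  have ha0 : a ≠ 0 := MonomialOrder.leadingCoeff_ne_zero_iff.2 hP
  obtain ⟨hS1, hS2⟩ := S_top P
  rw [← ha] at hS2
  set b := a.comp (Polynomial.X + 1) * (-Polynomial.X) ^ (mo.degree P).degree with hb
  set q := b / a with hq
  have hbq : a * q + b % a = b := EuclideanDomain.div_add_mod b a
  -- the remainder polynomial
  have hQA : ∀ z, ev g z (S P - C q * P) = 0 := by
    intro z
    rw [map_sub, map_mul, ev_S g hg hfe, hPA, hPA, mul_zero, sub_zero]
  have hQc : coeff (mo.degree P) (S P - C q * P) = b % a := by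
    rw [coeff_sub, coeff_C_mul, hS2]
    change b - q * a = _
    linear_combination -hbq
  have hQd : mo.toSyn (mo.degree (S P - C q * P)) ≤ mo.toSyn (mo.degree P) := by
    rw [MonomialOrder.degree_le_iff]
    intro m hm
    by_contra hlt
    rw [not_le] at hlt
    rw [mem_support_iff] at hm
    apply hm
    rw [coeff_sub, coeff_C_mul, MonomialOrder.coeff_eq_zero_of_lt (m := mo) hlt,
      MonomialOrder.coeff_eq_zero_of_lt (m := mo) (lt_of_le_of_lt hS1 hlt), mul_zero, sub_zero]
  have hQ0 : S P - C q * P = 0 := by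
    rcases hQd.lt_or_eq with h | h
    · exact hmin1 _ hQA h
    · by_contra hcon
      apply hcon
      have h' : mo.degree (S P - C q * P) = mo.degree P := mo.toSyn.injective h
      have hl : mo.leadingCoeff (S P - C q * P) = b % a := by
        rw [MonomialOrder.leadingCoeff, h', hQc]
      have hr0 : b % a ≠ 0 := by
        rw [← hl]; exact MonomialOrder.leadingCoeff_ne_zero_iff.2 hcon
      refine hmin2 _ hQA h' ?_
      rw [hl]
      exact Polynomial.natDegree_lt_natDegree hr0 (EuclideanDomain.mod_lt b ha0)
  have hr : b % a = 0 := by rw [← hQc, hQ0, coeff_zero]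
  have hSP : S P = C q * P := sub_eq_zero.1 hQ0
  rw [hr, add_zero] at hbq
  have hcomp0 : a.comp (Polynomial.X + 1) ≠ 0 := by
    intro h
    have h1 : (a.comp (Polynomial.X + 1)).comp (Polynomial.X - 1) = 0 := by
      rw [h, Polynomial.zero_comp]
    rw [Polynomial.comp_assoc] at h1
    apply ha0
    simpa using h1
  have hb0 : b ≠ 0 := mul_ne_zero hcomp0 (pow_ne_zero _ (neg_ne_zero.2 Polynomial.X_ne_zero))
  have hq0 : q ≠ 0 := by
    intro h
    rw [h, mul_zero] at hbq
    exact hb0 hbq.symm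
  have hdegq : q.natDegree = (mo.degree P).degree := by
    have h1 := congrArg Polynomial.natDegree hbq
    rw [Polynomial.natDegree_mul ha0 hq0, hb, Polynomial.natDegree_mul hcomp0
      (pow_ne_zero _ (neg_ne_zero.2 Polynomial.X_ne_zero)), Polynomial.natDegree_comp,
      Polynomial.natDegree_pow, Polynomial.natDegree_neg, Polynomial.natDegree_X,
      show (Polynomial.X + 1 : Polynomial ℂ) = Polynomial.X + Polynomial.C 1 by simp,
      Polynomial.natDegree_X_add_C] at h1
    omega
  by_cases hd0 : (mo.degree P).degree = 0
  · have hz : mo.degree P = 0 := by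
      rwa [Finsupp.degree_eq_zero_iff] at hd0
    have hPC := MonomialOrder.eq_C_of_degree_eq_zero hz
    rw [← ha] at hPC
    apply ha0
    apply Polynomial.funext
    intro z
    have := hPA z
    rw [hPC] at this
    simpa [ev] using this
  have hqdeg : q.degree ≠ 0 := by
    intro h
    apply hd0
    rw [← hdegq]
    exact Polynomial.natDegree_eq_of_degree_eq_some h
  obtain ⟨α, hα⟩ := IsAlgClosed.exists_root q hqdeg
  have hmapS : map (Polynomial.evalRingHom α) (S P) = 0 := by
    rw [hSP, map_mul, map_C, Polynomial.coe_evalRingHom, hα.eq_zero, map_zero, zero_mul]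
  rw [map_S] at hmapS
  by_cases hα0 : α = 0
  · subst hα0
    rw [neg_zero, zero_add] at hmapS
    have h1 := e0_of_L_zero _ hmapS
    have hk : ∀ k : ℕ, e0 ℂ (map (Polynomial.evalRingHom ((k : ℂ) + 1)) P) = 0 := by
      intro k
      induction k with
      | zero => simpa using h1
      | succ k ih =>
        have h2 := congrArg (e0 ℂ) (map_S ((k : ℂ) + 1) P)
        rw [hSP, map_mul, map_C, map_mul, ih, mul_zero, e0_L _ _ (by simp)] at h2
        have h3 := L_inj (neg_ne_zero.2 (by exact_mod_cast k.succ_ne_zero)) (by simp) _ h2.symm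
        push_cast
        exact h3
    have hcomm : ∀ z : ℂ, map (Polynomial.evalRingHom z) (e0 (Polynomial ℂ) P) =
        e0 ℂ (map (Polynomial.evalRingHom z) P) := by
      intro z
      have key : (map (Polynomial.evalRingHom z)).comp (e0 (Polynomial ℂ)).toRingHom =
          (e0 ℂ).toRingHom.comp (map (Polynomial.evalRingHom z)) := by
        apply MvPolynomial.ringHom_ext
        · intro p
          simp
        · intro i
          change map _ (e0 (Polynomial ℂ) (X i)) = e0 ℂ (map _ (X i))
          rw [map_X, e0, e0, aeval_X, aeval_X]
          split_ifs <;> simp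
      exact DFunLike.congr_fun key P
    have he : e0 (Polynomial ℂ) P = 0 := by
      ext1 m
      rw [coeff_zero]
      apply Polynomial.eq_zero_of_infinite_isRoot
      apply (Set.infinite_range_of_injective (f := fun k : ℕ => (k : ℂ) + 1) (by
        intro k l hkl
        simpa using hkl)).mono
      rintro _ ⟨k, rfl⟩
      have h2 := hcomm ((k : ℂ) + 1)
      rw [hk] at h2
      have h3 := congrArg (coeff m) h2
      rw [coeff_map, coeff_zero] at h3
      exact h3
    obtain ⟨Q, hQ⟩ := dvd_of_e0 P he
    have hQ0' : Q ≠ 0 := by rintro rfl; rw [mul_zero] at hQ; exact hP hQ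
    have hQA' := ev_mul_cancel g hg (X (OrderDual.toDual 0)) Q (by rw [← hQ]; exact hPA) (by
      by_contra hcon
      push Not at hcon
      apply hg0
      funext z
      simpa [ev] using hcon z)
    apply hQ0'
    apply hmin1 Q hQA'
    have hd := MonomialOrder.degree_mul (m := mo) (X_ne_zero (R := Polynomial ℂ)
      (OrderDual.toDual 0 : ℕᵒᵈ)) hQ0'
    rw [← hQ, MonomialOrder.degree_X] at hd
    rw [hd, map_add]
    apply lt_add_of_pos_left
    rw [MonomialOrder.toSyn_lt_iff_ne_zero]
    simp
  · have h1 := L_inj (neg_ne_zero.2 hα0) (by simp) _ hmapS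
    have hdvd : C (Polynomial.X - Polynomial.C (α + 1)) ∣ P := by
      rw [C_dvd_iff_dvd_coeff]
      intro m
      rw [Polynomial.dvd_iff_isRoot]
      have h3 := congrArg (coeff m) h1
      rw [coeff_map, coeff_zero] at h3
      exact h3
    obtain ⟨Q, hQ⟩ := hdvd
    have hQ0' : Q ≠ 0 := by rintro rfl; rw [mul_zero] at hQ; exact hP hQ
    have hX0 : (Polynomial.X - Polynomial.C (α + 1)) ≠ 0 := Polynomial.X_sub_C_ne_zero _
    have hQA' := ev_mul_cancel g hg _ Q (by rw [← hQ]; exact hPA) ⟨α, by simp [ev]⟩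
    apply hQ0'
    apply hmin2 Q hQA'
    · have hd := MonomialOrder.degree_mul (m := mo) (C_ne_zero.2 hX0) hQ0'
      rw [← hQ, MonomialOrder.degree_C, zero_add] at hd
      exact hd.symm
    · have hl := MonomialOrder.leadingCoeff_mul (m := mo)
        (f := C (Polynomial.X - Polynomial.C (α + 1))) (g := Q)
      rw [← hQ, MonomialOrder.leadingCoeff_C, ← ha] at hl
      have hlq : mo.leadingCoeff Q ≠ 0 := MonomialOrder.leadingCoeff_ne_zero_iff.2 hQ0'
      rw [hl, Polynomial.natDegree_mul hX0 hlq, Polynomial.natDegree_X_sub_C]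
      omega

theorem hoelder (g : ℂ → ℂ) (hg : Differentiable ℂ g) (hg0 : g ≠ 0)
    (hfe : ∀ z, g (z + 1) = -z * g z) (P : MvPolynomial (Option ℕ) ℂ)
    (hP : ∀ z, MvPolynomial.aeval (fun o : Option ℕ => o.elim z (fun i => iteratedDeriv i g z)) P
        = 0) : P = 0 := by
  have key : ∀ (z : ℂ) (P : MvPolynomial (Option ℕ) ℂ),
      ev g z (MvPolynomial.rename OrderDual.toDual (MvPolynomial.optionEquivRight ℂ ℕ P)) =
      MvPolynomial.aeval (fun o : Option ℕ => o.elim z (fun i => iteratedDeriv i g z)) P := by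
    intro z P
    induction P using MvPolynomial.induction_on with
    | C a => simp [ev, MvPolynomial.optionEquivRight_C]
    | add p q hp hq => rw [map_add, map_add, map_add, map_add, hp, hq]
    | mul_X p o hp =>
      have hX : ev g z (MvPolynomial.rename OrderDual.toDual
          (MvPolynomial.optionEquivRight ℂ ℕ (MvPolynomial.X o))) =
          MvPolynomial.aeval (fun o : Option ℕ => o.elim z (fun i => iteratedDeriv i g z))
            (MvPolynomial.X o : MvPolynomial (Option ℕ) ℂ) := by
        rw [MvPolynomial.aeval_X]
        cases o with
        | none =>
          rw [MvPolynomial.optionEquivRight_X_none, MvPolynomial.rename_C]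
          simp [ev]
        | some i =>
          rw [MvPolynomial.optionEquivRight_X_some, MvPolynomial.rename_X]
          simp [ev]
      rw [map_mul, map_mul, map_mul, map_mul, hp, hX]
  have h1 := hoelder_core g hg hg0 hfe
    (MvPolynomial.rename OrderDual.toDual (MvPolynomial.optionEquivRight ℂ ℕ P))
    (fun z => (key z P).trans (hP z))
  have h2 := MvPolynomial.rename_injective _ OrderDual.toDual.injective
    (h1.trans (map_zero _).symm)
  exact (MvPolynomial.optionEquivRight ℂ ℕ).injective (h2.trans (map_zero _).symm)

end HadAux

/-- Every function meromorphic on ℂ satisfying Hadamard's functional equation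
`H (z+1) = z * H z + 1 / Γ (1-z)` (wherever all three terms are analytic) is
differentially transcendental. -/
theorem hadamard_diffTranscendental (H : ℂ → ℂ)
    (hmero : MeromorphicOn H Set.univ)
    (hfe : ∀ z : ℂ, AnalyticAt ℂ H (z + 1) → AnalyticAt ℂ H z →
      AnalyticAt ℂ (fun w : ℂ => 1 / Complex.Gamma (1 - w)) z →
      H (z + 1) = z * H z + 1 / Complex.Gamma (1 - z)) :
    ¬ DifferentiallyAlgebraic H := by
  rintro ⟨n, P, hP, hPz⟩
  set g : ℂ → ℂ := fun w : ℂ => 1 / Complex.Gamma (1 - w) with hg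
  have hgd : Differentiable ℂ g := by
    have : g = fun w => (Complex.Gamma (1 - w))⁻¹ := by funext w; simp [hg]
    rw [this]
    exact Complex.differentiable_one_div_Gamma.comp ((differentiable_const 1).sub differentiable_id)
  have hg0 : g ≠ 0 := by
    intro h
    have := congrFun h 0
    simp [hg] at this
  have hgfe : ∀ z, g (z + 1) = -z * g z := by
    intro z
    have := Complex.one_div_Gamma_eq_self_mul_one_div_Gamma_add_one (-z)
    simp only [hg, one_div]
    rw [show 1 - (z + 1) = -z by ring, this, show -z + 1 = 1 - z by ring]
  -- a point where `H` and its shift are analytic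
  have h0 : ∀ᶠ z in nhdsWithin (0 : ℂ) {0}ᶜ, AnalyticAt ℂ H z :=
    (hmero 0 (Set.mem_univ _)).eventually_analyticAt
  have h1 : ∀ᶠ z in nhdsWithin (1 : ℂ) {1}ᶜ, AnalyticAt ℂ H z :=
    (hmero 1 (Set.mem_univ _)).eventually_analyticAt
  have ht : Filter.Tendsto (fun z : ℂ => z + 1) (nhdsWithin (0 : ℂ) {0}ᶜ)
      (nhdsWithin (1 : ℂ) {1}ᶜ) := by
    apply tendsto_nhdsWithin_of_tendsto_nhds_of_eventually_within
    · apply Filter.Tendsto.mono_left _ nhdsWithin_le_nhds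
      have : Continuous (fun z : ℂ => z + 1) := by fun_prop
      simpa using this.tendsto 0
    · filter_upwards [self_mem_nhdsWithin] with z hz
      simpa using hz
  obtain ⟨c, hc0, hc1⟩ := (h0.and (ht.eventually h1)).exists
  have hH1 : AnalyticAt ℂ (fun z => H (z + 1)) c :=
    AnalyticAt.fun_comp hc1 (analyticAt_id.add analyticAt_const)
  have hcont : Filter.Tendsto (fun z : ℂ => z + 1) (nhds c) (nhds (c + 1)) := by
    have : Continuous (fun z : ℂ => z + 1) := by fun_prop
    exact this.tendsto c
  have ev0 := hc0.eventually_analyticAt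
  have ev1 := hcont.eventually hc1.eventually_analyticAt
  have dep0 := HadAux.dep_of_eval (c := c) (b := 0) hc0 n P hP (by
    filter_upwards [ev0] with z hz
    simpa only [add_zero] using hPz z hz)
  have dep1 := HadAux.dep_of_eval (c := c) (b := 1) hH1 n P hP (by
    filter_upwards [ev1] with z hz
    have := hPz (z + 1) hz
    simpa only [iteratedDeriv_comp_add_const] using this)
  have dep := HadAux.closure_sub (PowerSeries.derivative ℂ) _ _ _ _
    (HadAux.T_transcendental c 0) (HadAux.T_deriv_z c 0)
    (HadAux.T_transcendental c 1) (HadAux.T_deriv_z c 1) dep0 dep1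
  have hid : AnalyticAt ℂ (fun z : ℂ => z + 0) c := analyticAt_id.add analyticAt_const
  have hTg : HadAux.T c (fun z => H (z + 1)) -
      HadAux.T c (fun z => z + 0) * HadAux.T c H = HadAux.T c g := by
    rw [sub_eq_iff_eq_add, ← HadAux.T_mul hid hc0,
      ← HadAux.T_add (hgd.analyticAt c) (hid.fun_mul hc0)]
    apply HadAux.T_congr
    filter_upwards [ev0, ev1] with z hz0 hz1
    rw [hfe z hz1 hz0 (hgd.analyticAt z)]
    simp only [hg]
    ring
  rw [hTg] at dep
  obtain ⟨Q, hQ0, hQ⟩ := HadAux.eval_of_dep hgd dep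
  exact hQ0 (HadAux.hoelder g hgd hg0 hgfe Q hQ)
end

section
/- Fix a real number x₀ > 0. Every function f : ℂ → ℂ meromorphic on ℂ satisfying the functional equation f(α) = x₀·f(α−1) + Γ(α) for every α ∈ ℂ at which f(α), f(α−1), and Γ(α) are all analytic, is differentially transcendental. -/
section gwA
open Algebra

theorem gw_exists_alg {R : Type*} [CommRing R] [IsDomain R] [Algebra ℂ R] (v : ℕ → R) (N : ℕ)
    (h : ¬ AlgebraicIndepOn ℂ v (Set.Iio N)) :
    ∃ k < N, IsAlgebraic (adjoin ℂ (v '' Set.Iio k)) (v k) := by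
  induction N with
  | zero =>
    exfalso; apply h
    have : IsEmpty (Set.Iio 0 : Set ℕ) := by
      constructor; rintro ⟨x, hx⟩; simp at hx
    exact algebraicIndependent_empty_type_iff.mpr (FaithfulSMul.algebraMap_injective ℂ R)
  | succ n ih =>
    by_cases hn : AlgebraicIndepOn ℂ v (Set.Iio n)
    · refine ⟨n, Nat.lt_succ_self n, ?_⟩
      by_contra hc
      apply h
      have := AlgebraicIndepOn.insert hn hc
      have e : insert n (Set.Iio n) = Set.Iio (n+1) := by
        ext x; simp
        try omega
      rwa [e] at this
    · obtain ⟨k, hk, h'⟩ := ih hn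
      exact ⟨k, by omega, h'⟩

theorem gw_alg_mono {R : Type*} [CommRing R] [IsDomain R] [Algebra ℂ R] {s t : Set R} (hst : s ⊆ t)
    {a : R} (h : IsAlgebraic (adjoin ℂ s) a) : IsAlgebraic (adjoin ℂ t) a :=
  h.adjoin_of_forall_isAlgebraic fun _ hx => (hx.2 (hst hx.1)).elim

theorem gw_alg_of_mem {R : Type*} [CommRing R] [IsDomain R] [Algebra ℂ R] {s : Set R} 
    {a : R} (h : a ∈ adjoin ℂ s) : IsAlgebraic (adjoin ℂ s) a :=
  isAlgebraic_algebraMap (⟨a, h⟩ : adjoin ℂ s)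

theorem gw_closed {R : Type*} [CommRing R] [IsDomain R] [Algebra ℂ R] (D : Derivation ℂ R R)
    (s : Set R) (hs : ∀ a ∈ s, IsAlgebraic (adjoin ℂ s) (D a)) (b : R)
    (hb : IsAlgebraic (adjoin ℂ s) b) : IsAlgebraic (adjoin ℂ s) (D b) := by
  classical
  have : CharZero (adjoin ℂ s) :=
    charZero_of_injective_algebraMap (algebraMap ℂ (adjoin ℂ s)).injective
  have h1 : ∀ a ∈ adjoin ℂ s, IsAlgebraic (adjoin ℂ s) (D a) := by
    intro a ha
    induction ha using Algebra.adjoin_induction with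
    | mem x hx => exact hs x hx
    | algebraMap r => simpa using isAlgebraic_zero
    | add x y hx hy h1 h2 => rw [map_add]; exact h1.add h2
    | mul x y hx hy h1 h2 =>
      rw [Derivation.leibniz, smul_eq_mul, smul_eq_mul]
      exact ((gw_alg_of_mem hx).mul h2).add ((gw_alg_of_mem hy).mul h1)
  have hex : ∃ n, ∃ p : Polynomial (adjoin ℂ s), p ≠ 0 ∧ Polynomial.aeval b p = 0 ∧ p.natDegree = n := by
    obtain ⟨p, h0, hp⟩ := hb
    exact ⟨_, p, h0, hp, rfl⟩
  obtain ⟨p, hp0, hp, hdeg⟩ := Nat.find_spec hex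
  have hmin := fun m hm => Nat.find_min hex (m := m) hm
  rw [← hdeg] at hmin
  have hd0 : p.natDegree ≠ 0 := by
    intro h0
    rw [Polynomial.eq_C_of_natDegree_eq_zero h0] at hp hp0
    simp only [Polynomial.aeval_C] at hp
    apply hp0
    rw [(FaithfulSMul.algebraMap_injective (adjoin ℂ s) R) (hp.trans (map_zero _).symm), map_zero]
  have hder : Polynomial.aeval b (Polynomial.derivative p) ≠ 0 := by
    intro hz
    have hlt := Polynomial.natDegree_derivative_lt hd0
    refine hmin _ hlt ⟨_, ?_, hz, rfl⟩
    intro h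
    exact hd0 (Polynomial.derivative_eq_zero.mp h)
  have key : ∀ q : Polynomial (adjoin ℂ s), ∃ c, IsAlgebraic (adjoin ℂ s) c ∧
      D (Polynomial.aeval b q) = c + Polynomial.aeval b (Polynomial.derivative q) * D b := by
    intro q
    induction q using Polynomial.induction_on' with
    | add p q hp hq =>
      obtain ⟨c, hc, h⟩ := hp
      obtain ⟨d, hd, h'⟩ := hq
      refine ⟨c + d, hc.add hd, ?_⟩
      simp only [map_add, h, h']; ring
    | monomial n a =>
      refine ⟨D a * b ^ n, (h1 a a.2).mul (hb.pow n), ?_⟩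
      rw [Polynomial.derivative_monomial, Polynomial.aeval_monomial, Polynomial.aeval_monomial,
        Derivation.leibniz, Derivation.leibniz_pow]
      have e : algebraMap (adjoin ℂ s) R a = (a : R) := rfl
      simp only [map_mul, map_natCast, e, smul_eq_mul, nsmul_eq_mul]
      ring
  obtain ⟨c, hc, h⟩ := key p
  rw [hp, map_zero] at h
  have h2 : Polynomial.aeval b (Polynomial.derivative p) * D b = - c := by
    linear_combination -h
  refine IsAlgebraic.of_mul (mem_nonZeroDivisors_of_ne_zero hder) ?_ (h2 ▸ hc.neg)
  have : ∀ q : Polynomial (adjoin ℂ s), IsAlgebraic (adjoin ℂ s) (Polynomial.aeval b q) := by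
    intro q
    induction q using Polynomial.induction_on' with
    | add p q hp hq => rw [map_add]; exact hp.add hq
    | monomial n a =>
      rw [Polynomial.aeval_monomial]
      exact (isAlgebraic_algebraMap a).mul (hb.pow n)
  exact this _

theorem gw_finite {R : Type*} [CommRing R] [IsDomain R] [Algebra ℂ R] (s : Set R) (hs : s.Finite)
    {ι : Type*} [Infinite ι] (y : ι → R) (hy : ∀ i, IsAlgebraic (adjoin ℂ s) (y i)) :
    ¬ AlgebraicIndependent ℂ y := by
  intro h
  have hi : (AlgebraicIndependent.matroid ℂ R).Indep (Set.range y) :=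
    h.to_subtype_range
  have hsub : Set.range y ⊆ (AlgebraicIndependent.matroid ℂ R).closure s := by
    rw [AlgebraicIndependent.matroid_closure_eq]
    rintro _ ⟨i, rfl⟩
    exact hy i
  have h1 := hi.encard_le_eRk_of_subset hsub
  rw [Matroid.eRk_closure_eq] at h1
  have h2 := h1.trans ((AlgebraicIndependent.matroid ℂ R).eRk_le_encard s)
  have h3 : (Set.range y).Infinite := Set.infinite_range_of_injective h.injective
  rw [h3.encard_eq, top_le_iff, Set.encard_eq_top_iff] at h2
  exact h2 hs

/-- From a differential-algebraic relation to a finite transcendence-degree differential closure. -/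
theorem gw_diffalg {R : Type*} [CommRing R] [IsDomain R] [Algebra ℂ R] (D : Derivation ℂ R R)
    (t a : R) (ht : Transcendental ℂ t) (hD : D t = 1) (v : ℕ → R) (hv0 : v 0 = t)
    (hv : ∀ k, v (k+1) = D^[k] a) (N : ℕ)
    (h : ¬ AlgebraicIndepOn ℂ v (Set.Iio N)) :
    ∃ s : Set R, s.Finite ∧ t ∈ s ∧ IsAlgebraic (adjoin ℂ s) a ∧
      ∀ b ∈ s, IsAlgebraic (adjoin ℂ s) (D b) := by
  obtain ⟨k, -, hk⟩ := gw_exists_alg v N h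
  have hk0 : k ≠ 0 := by
    rintro rfl
    have e : v '' Set.Iio 0 = ∅ := by simp
    rw [e, hv0, Algebra.adjoin_empty] at hk
    exact ht (Subalgebra.isAlgebraic_of_isAlgebraic_bot hk)
  have hle : ∀ j, j ≤ k → IsAlgebraic (adjoin ℂ (v '' Set.Iio k)) (v j) := by
    intro j hj
    rcases hj.lt_or_eq with h | rfl
    · exact gw_alg_of_mem (subset_adjoin ⟨j, h, rfl⟩)
    · exact hk
  refine ⟨v '' Set.Iio k, (Set.finite_Iio k).image _, ⟨0, Nat.pos_of_ne_zero hk0, hv0⟩, ?_, ?_⟩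
  · have := hle 1 (by omega)
    rwa [hv 0] at this
  · rintro _ ⟨j, hj, rfl⟩
    have hj : j < k := hj
    cases j with
    | zero => rw [hv0, hD]; exact isAlgebraic_one
    | succ j =>
      rw [hv j, ← Function.iterate_succ_apply' D, ← hv]
      exact hle _ (by omega)
end gwA

section gwC
open MvPolynomial

variable {σ K : Type*} [Field K]

noncomputable def gwT (τ : K →+* K) (b : σ → K) : MvPolynomial σ K →+* MvPolynomial σ K :=
  eval₂Hom (C.comp τ) (fun i => X i + C (b i))

theorem gwT_C (τ : K →+* K) (b : σ → K) (a : K) : gwT τ b (C a) = C (τ a) := by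
  simp [gwT]

theorem gwT_X (τ : K →+* K) (b : σ → K) (i : σ) : gwT τ b (X i) = X i + C (b i) := by
  simp [gwT]

theorem gwT_coeff_monomial (τ : K →+* K) (b : σ → K) (s : σ →₀ ℕ) (a : K) :
    ∀ m : σ →₀ ℕ, s.degree ≤ m.degree →
      coeff m (gwT τ b (monomial s a)) = τ (coeff m (monomial s a)) := by
  classical
  by_cases ha : a = 0
  · subst ha; simp
  have key : ∀ m : σ →₀ ℕ, (monomial s a : MvPolynomial σ K).totalDegree ≤ m.degree →
      coeff m (gwT τ b (monomial s a)) = τ (coeff m (monomial s a)) := by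
    refine MvPolynomial.induction_on_monomial (motive := fun p => ∀ m : σ →₀ ℕ,
      p.totalDegree ≤ m.degree → coeff m (gwT τ b p) = τ (coeff m p)) ?_ ?_ s a
    · intro a m _
      rw [gwT_C, coeff_C, coeff_C]
      split_ifs <;> simp
    · intro p i hp m hm
      by_cases h0 : p = 0
      · subst h0; simp
      rw [totalDegree_mul_of_isDomain h0 (X_ne_zero i), totalDegree_X] at hm
      rw [map_mul, gwT_X, mul_add, coeff_add, mul_comm _ (C (b i)), coeff_C_mul, hp m (by omega),
        coeff_eq_zero_of_totalDegree_lt (f := p) (d := m) (by exact hm), coeff_mul_X',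
        coeff_mul_X']
      split_ifs with hi
      · have hi' : Finsupp.single i 1 ≤ m := by
          rw [Finsupp.single_le_iff]
          exact Nat.one_le_iff_ne_zero.mpr (Finsupp.mem_support_iff.mp hi)
        have h1 := congrArg Finsupp.degree (tsub_add_cancel_of_le hi')
        rw [map_add, Finsupp.degree_single] at h1
        rw [hp _ (by omega)]; simp
      · simp
  intro m hm
  refine key m ?_
  rw [totalDegree_monomial _ ha]
  exact hm

theorem gwT_coeff (τ : K →+* K) (b : σ → K) (P : MvPolynomial σ K) (m : σ →₀ ℕ)
    (hm : P.totalDegree ≤ m.degree) : coeff m (gwT τ b P) = τ (coeff m P) := by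
  classical
  conv_lhs => rw [P.as_sum]
  conv_rhs => rw [P.as_sum]
  rw [map_sum, coeff_sum, coeff_sum, map_sum]
  refine Finset.sum_congr rfl fun s hs => gwT_coeff_monomial τ b s _ m ?_
  exact (le_totalDegree hs).trans hm

theorem gwT_eval {M : Type*} [CommRing M] (φ : K →+* M) (τ : K →+* K) (τM : M →+* M)
    (hφ : ∀ a, τM (φ a) = φ (τ a)) (b : σ → K) (y : σ → M) (hy : ∀ i, τM (y i) = y i + φ (b i))
    (P : MvPolynomial σ K) : eval₂ φ y (gwT τ b P) = τM (eval₂ φ y P) := by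
  induction P using MvPolynomial.induction_on with
  | C a => simp [gwT_C, hφ]
  | add p q hp hq => simp [hp, hq]
  | mul_X p i hp => simp [hp, gwT_X, hy]

theorem gwT_pderiv (τ : K →+* K) (b : σ → K) (i : σ) (P : MvPolynomial σ K) :
    pderiv i (gwT τ b P) = gwT τ b (pderiv i P) := by
  classical
  induction P using MvPolynomial.induction_on with
  | C a => simp [gwT_C]
  | add p q hp hq => simp [hp, hq]
  | mul_X p j hp =>
    simp only [map_mul, Derivation.leibniz, smul_eq_mul, hp, gwT_X, map_add, pderiv_C, add_zero, pderiv_X]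
    by_cases h : i = j
    · subst h; simp
    · simp [Pi.single_apply, h, Ne.symm h]

theorem gw_exists_fixed {M : Type*} [CommRing M] [Nontrivial M] (φ : K →+* M) (τ : K →+* K)
    (τM : M →+* M)
    (hφ : ∀ a, τM (φ a) = φ (τ a)) (b : σ → K) (y : σ → M) (hy : ∀ i, τM (y i) = y i + φ (b i))
    (P : MvPolynomial σ K) (hP : P ≠ 0) (hV : eval₂ φ y P = 0) :
    ∃ Q : MvPolynomial σ K, gwT τ b Q = Q ∧ ∀ a, Q ≠ C a := by
  classical
  have hex : ∃ d, ∃ P : MvPolynomial σ K, P ≠ 0 ∧ eval₂ φ y P = 0 ∧ P.totalDegree = d :=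
    ⟨_, P, hP, hV, rfl⟩
  obtain ⟨d, hd⟩ : ∃ d, d = Nat.find hex := ⟨_, rfl⟩
  have hmin := fun m hm => Nat.find_min hex (m := m) hm
  have hex2 : ∃ k, ∃ P : MvPolynomial σ K, P ≠ 0 ∧ eval₂ φ y P = 0 ∧ P.totalDegree = d ∧
      (P.support.filter (fun m => m.degree = d)).card = k := by
    obtain ⟨P, h1, h2, h3⟩ := Nat.find_spec hex
    exact ⟨_, P, h1, h2, h3.trans hd.symm, rfl⟩
  obtain ⟨Q, hQ0, hQV, hQd, hQk⟩ := Nat.find_spec hex2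
  have hmin2 := fun m hm => Nat.find_min hex2 (m := m) hm
  rw [← hQk] at hmin2
  rw [← hd] at hmin
  obtain ⟨m0, hm0, hm0d⟩ : ∃ m0 ∈ Q.support, m0.degree = d := by
    obtain ⟨m, hm, h⟩ := Finset.exists_mem_eq_sup Q.support (support_nonempty.mpr hQ0) (fun s => s.sum fun _ e => e)
    exact ⟨m, hm, by rw [← hQd]; exact h.symm⟩
  have hc : coeff m0 Q ≠ 0 := mem_support_iff.mp hm0
  set c := (coeff m0 Q)⁻¹ with hcdef
  have hc0 : c ≠ 0 := inv_ne_zero hc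
  set R := C c * Q with hR
  have hRcoeff : ∀ m, coeff m R = c * coeff m Q := fun m => coeff_C_mul _ _ _
  have hR0 : R ≠ 0 := mul_ne_zero (by simpa using hc0) hQ0
  have hRV : eval₂ φ y R = 0 := by rw [hR, eval₂_mul, hQV, mul_zero]
  have hRd : R.totalDegree ≤ d := by
    refine (totalDegree_mul _ _).trans ?_
    simp [hQd]
  refine ⟨R, ?_, ?_⟩
  · by_contra hne
    set S := gwT τ b R - R with hS
    have hS0 : S ≠ 0 := sub_ne_zero.mpr hne
    have hSV : eval₂ φ y S = 0 := by
      rw [hS, eval₂_sub, gwT_eval φ τ τM hφ b y hy, hRV, map_zero, sub_zero]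
    have hScoeff : ∀ m : σ →₀ ℕ, d ≤ m.degree → coeff m S = τ (coeff m R) - coeff m R := by
      intro m hm
      rw [hS, coeff_sub, gwT_coeff τ b R m (hRd.trans hm)]
    have hSd : S.totalDegree ≤ d := by
      refine Finset.sup_le fun m hm => ?_
      by_contra hlt
      have hlt : d < m.degree := not_le.mp hlt
      apply mem_support_iff.mp hm
      have : coeff m R = 0 := coeff_eq_zero_of_totalDegree_lt (hRd.trans_lt hlt)
      rw [hScoeff m hlt.le, this, map_zero, sub_zero]
    have hSd' : S.totalDegree = d := by
      refine le_antisymm hSd ?_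
      by_contra hlt
      exact hmin _ (not_le.mp hlt) ⟨S, hS0, hSV, rfl⟩
    refine hmin2 _ ?_ ⟨S, hS0, hSV, hSd', rfl⟩
    apply Finset.card_lt_card
    refine Finset.ssubset_iff_of_subset ?_ |>.mpr ⟨m0, ?_, ?_⟩
    · intro m hm
      rw [Finset.mem_filter] at hm ⊢
      refine ⟨?_, hm.2⟩
      rw [mem_support_iff] at *
      intro h0
      apply hm.1
      rw [hScoeff m hm.2.ge, hRcoeff, h0]; simp
    · simp only [Finset.mem_filter]; exact ⟨hm0, hm0d⟩
    · simp only [Finset.mem_filter, mem_support_iff, not_and, not_not]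
      intro h; exfalso; apply h
      rw [hScoeff m0 hm0d.ge, hRcoeff, hcdef, inv_mul_cancel₀ hc]; simp
  · intro a ha
    rw [ha, eval₂_C] at hRV
    have : a = 0 := φ.injective (hRV.trans (map_zero φ).symm)
    rw [this, map_zero] at ha
    exact hR0 ha

theorem gw_const_of_pderiv [CharZero K] (Q : MvPolynomial σ K) (h : ∀ i, pderiv i Q = 0) :
    Q = C (coeff 0 Q) := by
  classical
  ext m
  rw [coeff_C]
  split_ifs with hm
  · rw [← hm]
  · obtain ⟨i, hi⟩ := Finsupp.ne_iff.mp (Ne.symm hm)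
    have h1 := congrArg (coeff (m - Finsupp.single i 1)) (h i)
    have hi' : Finsupp.single i 1 ≤ m := by
      rw [Finsupp.single_le_iff]; exact Nat.one_le_iff_ne_zero.mpr hi
    rw [coeff_pderiv, tsub_add_cancel_of_le hi', coeff_zero] at h1
    rcases mul_eq_zero.mp h1 with h | h
    · exact h
    · exfalso; exact_mod_cast h

theorem gw_pderiv_degree [CharZero K] (Q : MvPolynomial σ K) (i : σ) (h : pderiv i Q ≠ 0) :
    (pderiv i Q).totalDegree < Q.totalDegree := by
  classical
  obtain ⟨m, hm, h⟩ := Finset.exists_mem_eq_sup (pderiv i Q).support (support_nonempty.mpr h) (fun s => s.sum fun _ e => e)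
  have e : (pderiv i Q).totalDegree = m.degree := h
  rw [mem_support_iff, coeff_pderiv] at hm
  have h2 : m + Finsupp.single i 1 ∈ Q.support := mem_support_iff.mpr (left_ne_zero_of_mul hm)
  have h3 : (m + Finsupp.single i 1).degree ≤ Q.totalDegree := le_totalDegree h2
  rw [map_add, Finsupp.degree_single] at h3
  omega

theorem gw_affine [CharZero K] (τ : K →+* K) (b : σ → K) : ∀ (d : ℕ) (Q : MvPolynomial σ K),
    Q.totalDegree ≤ d → gwT τ b Q = Q → (∀ a, Q ≠ C a) →
    ∃ (S : Finset σ) (c : σ → K) (j : σ) (g : K), j ∈ S ∧ c j ≠ 0 ∧ (∀ i, τ (c i) = c i) ∧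
      ∑ i ∈ S, c i * b i = g - τ g := by
  classical
  intro d
  induction d with
  | zero =>
    intro Q hQ _ hc
    exact absurd (totalDegree_eq_zero_iff_eq_C.mp (Nat.le_zero.mp hQ)) (hc _)
  | succ d ih =>
    intro Q hQ hT hc
    by_cases hex : ∃ i, ∀ a, pderiv i Q ≠ C a
    · obtain ⟨i, hi⟩ := hex
      refine ih (pderiv i Q) ?_ ?_ hi
      · have := gw_pderiv_degree Q i (by simpa using hi 0)
        omega
      · rw [← gwT_pderiv, hT]
    · push Not at hex
      choose c hcQ using hex
      have hcτ : ∀ i, τ (c i) = c i := by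
        intro i
        have : gwT τ b (pderiv i Q) = pderiv i Q := by rw [← gwT_pderiv, hT]
        rw [hcQ, gwT_C] at this
        exact C_injective _ _ this
      have hzero : ∀ i, i ∉ Q.vars → c i = 0 := by
        intro i hi
        have := hcQ i
        rw [pderiv_eq_zero_of_notMem_vars hi] at this
        exact (C_injective σ K (by rw [← this, map_zero]))
      have hform : Q - ∑ i ∈ Q.vars, C (c i) * X i = C (coeff 0 (Q - ∑ i ∈ Q.vars, C (c i) * X i)) := by
        apply gw_const_of_pderiv
        intro j
        rw [map_sub, hcQ, map_sum]
        have : ∀ i ∈ Q.vars, pderiv j (C (c i) * X i) = if i = j then C (c i) else 0 := by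
          intro i _
          rw [pderiv_C_mul, pderiv_X]
          by_cases h : i = j
          · subst h; simp [C_mul']
          · simp [Pi.single_apply, h]
        rw [Finset.sum_congr rfl this, Finset.sum_ite_eq']
        split_ifs with hj
        · simp
        · simp [hzero j hj]
      set g := coeff 0 (Q - ∑ i ∈ Q.vars, C (c i) * X i)
      have hQe : Q = C g + ∑ i ∈ Q.vars, C (c i) * X i := by rw [← hform]; ring
      obtain ⟨j, hj⟩ : ∃ j, c j ≠ 0 := by
        by_contra hn
        push Not at hn
        apply hc g
        rw [hQe]; simp [hn]
      refine ⟨Q.vars, c, j, g, ?_, hj, hcτ, ?_⟩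
      · by_contra hjn; exact hj (hzero j hjn)
      · have h1 : gwT τ b (C g + ∑ i ∈ Q.vars, C (c i) * X i) = C g + ∑ i ∈ Q.vars, C (c i) * X i := by
          rw [← hQe, hT]
        simp only [map_add, map_sum, map_mul, gwT_C, gwT_X, hcτ, mul_add, Finset.sum_add_distrib] at h1
        apply C_injective σ K
        simp only [map_sum, map_sub, map_mul]
        linear_combination h1

theorem gw_difference [CharZero K] {M : Type*} [CommRing M] [Nontrivial M] (φ : K →+* M)
    (τ : K →+* K) (τM : M →+* M)
    (hφ : ∀ a, τM (φ a) = φ (τ a)) (b : σ → K) (y : σ → M) (hy : ∀ i, τM (y i) = y i + φ (b i))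
    (P : MvPolynomial σ K) (hP : P ≠ 0) (hV : eval₂ φ y P = 0) :
    ∃ (S : Finset σ) (c : σ → K) (j : σ) (g : K), j ∈ S ∧ c j ≠ 0 ∧ (∀ i, τ (c i) = c i) ∧
      ∑ i ∈ S, c i * b i = g - τ g := by
  obtain ⟨Q, hQ, hc⟩ := gw_exists_fixed φ τ τM hφ b y hy P hP hV
  exact gw_affine τ b _ Q le_rfl hQ hc

end gwC

section gwD
open Polynomial Filter

theorem gw_poly_eventually_ne (p : ℂ[X]) (hp : p ≠ 0) : ∀ᶠ n : ℕ in atTop, p.eval (n : ℂ) ≠ 0 := by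
  have hfin : {n : ℕ | p.eval (n : ℂ) = 0}.Finite := by
    refine Set.Finite.of_finite_image (f := fun n : ℕ => (n : ℂ)) ?_ (Nat.cast_injective.injOn)
    refine (p.roots.toFinset.finite_toSet).subset ?_
    rintro _ ⟨n, hn, rfl⟩
    simpa [hp] using hn
  rw [← Nat.cofinite_eq_atTop]
  exact hfin.compl_mem_cofinite

noncomputable def gwev : ℂ[X] →+* Germ (atTop : Filter ℕ) ℂ where
  toFun p := ((fun n : ℕ => p.eval (n : ℂ)) : ℕ → ℂ)
  map_one' := by simp; rfl
  map_zero' := by simp; rfl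
  map_mul' p q := by simp only [eval_mul]; rfl
  map_add' p q := by simp only [eval_add]; rfl

theorem gwev_unit (p : nonZeroDivisors ℂ[X]) : IsUnit (gwev p) := by
  have hp := gw_poly_eventually_ne p (nonZeroDivisors.coe_ne_zero p)
  refine IsUnit.of_mul_eq_one (((fun n : ℕ => ((p : ℂ[X]).eval (n : ℂ))⁻¹) : ℕ → ℂ) : Germ (atTop : Filter ℕ) ℂ) ?_
  refine Germ.coe_eq.mpr ?_
  filter_upwards [hp] with n hn
  exact mul_inv_cancel₀ hn

noncomputable def gwφ : RatFunc ℂ →+* Germ (atTop : Filter ℕ) ℂ :=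
  IsLocalization.lift (M := nonZeroDivisors ℂ[X]) (g := gwev) gwev_unit

theorem gwφ_alg (p : ℂ[X]) : gwφ (algebraMap _ _ p) = gwev p := IsLocalization.lift_eq _ _

noncomputable def gwτ : RatFunc ℂ →+* RatFunc ℂ :=
  IsLocalization.lift (M := nonZeroDivisors ℂ[X])
    (g := (algebraMap ℂ[X] (RatFunc ℂ)).comp (taylorAlgHom (1 : ℂ)).toRingHom) (by
      intro p
      rw [isUnit_iff_ne_zero]
      have : (taylorAlgHom (1 : ℂ)) (p : ℂ[X]) ≠ 0 := by
        have h := (taylorEquiv (1 : ℂ)).map_ne_zero_iff.mpr (nonZeroDivisors.coe_ne_zero p)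
        exact h
      simpa using this)

theorem gwτ_alg (p : ℂ[X]) : gwτ (algebraMap _ _ p) = algebraMap _ _ (taylor 1 p) :=
  IsLocalization.lift_eq _ _

noncomputable def gwτM : Germ (atTop : Filter ℕ) ℂ →+* Germ (atTop : Filter ℕ) ℂ where
  toFun f := f.compTendsto (fun n => n + 1) (tendsto_add_atTop_nat 1)
  map_one' := rfl
  map_zero' := rfl
  map_mul' p q := by
    induction p using Germ.inductionOn
    induction q using Germ.inductionOn
    rfl
  map_add' p q := by
    induction p using Germ.inductionOn
    induction q using Germ.inductionOn
    rfl

theorem gwτM_coe (f : ℕ → ℂ) : gwτM (f : Germ (atTop : Filter ℕ) ℂ) = ((fun n => f (n + 1) : ℕ → ℂ) : Germ (atTop : Filter ℕ) ℂ) := rfl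

theorem gwev_coe (p : ℂ[X]) : gwev p = ((fun n : ℕ => p.eval (n : ℂ) : ℕ → ℂ) : Germ (atTop : Filter ℕ) ℂ) := rfl

theorem gw_compat (a : RatFunc ℂ) : gwτM (gwφ a) = gwφ (gwτ a) := by
  have : gwτM.comp gwφ = gwφ.comp gwτ := by
    refine IsLocalization.ringHom_ext (nonZeroDivisors ℂ[X]) ?_
    refine RingHom.ext fun p => ?_
    simp only [RingHom.comp_apply, gwτ_alg, gwφ_alg, gwev_coe, gwτM_coe, taylor_eval]
    simp
  exact congrArg (fun h => h a) this

theorem gw_const (c : RatFunc ℂ) (hc : gwτ c = c) : ∃ a : ℂ, c = algebraMap ℂ[X] _ (C a) := by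
  have h := gw_compat c
  rw [hc] at h
  obtain ⟨f, hf⟩ : ∃ f : ℕ → ℂ, (f : Germ (atTop : Filter ℕ) ℂ) = gwφ c := Quotient.exists_rep _
  rw [← hf, gwτM_coe, Germ.coe_eq] at h
  obtain ⟨N, hN⟩ := eventually_atTop.mp h
  refine ⟨f N, gwφ.injective ?_⟩
  rw [gwφ_alg, gwev_coe, ← hf, Germ.coe_eq]
  filter_upwards [eventually_ge_atTop N] with n hn
  rw [eval_C]
  induction n, hn using Nat.le_induction with
  | base => rfl
  | succ n hn ih => rw [← ih]; exact hN n hn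

theorem gw_pole (u : ℂ[X]) (hu : u.eval 0 ≠ 0) (k : ℕ) (hk : k ≠ 0) (g : RatFunc ℂ) :
    algebraMap ℂ[X] (RatFunc ℂ) u ≠ algebraMap ℂ[X] (RatFunc ℂ) (X ^ k) * (g - gwτ g) := by
  intro h
  set p := g.num
  set q := g.denom
  have hq : q ≠ 0 := g.denom_ne_zero
  have hcop : IsCoprime p q := g.isCoprime_num_denom
  have hq' : taylor 1 q ≠ 0 := by
    have h := (taylorEquiv (1 : ℂ)).map_ne_zero_iff.mpr hq
    exact h
  have hg : g = algebraMap _ _ p / algebraMap _ _ q := (RatFunc.num_div_denom g).symm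
  have e : u * (q * taylor 1 q) = X ^ k * (p * taylor 1 q - taylor 1 p * q) := by
    apply RatFunc.algebraMap_injective ℂ
    rw [hg, map_div₀, gwτ_alg, gwτ_alg] at h
    have h1 : algebraMap ℂ[X] (RatFunc ℂ) q ≠ 0 := by simpa using hq
    have h2 : algebraMap ℂ[X] (RatFunc ℂ) (taylor 1 q) ≠ 0 := by simpa using hq'
    field_simp at h
    simp only [map_mul, map_sub, map_pow] at h ⊢
    linear_combination h
  have hcop' : IsCoprime (taylor 1 p) (taylor 1 q) := hcop.map (taylorAlgHom (1 : ℂ)).toRingHom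
  have d1 : q ∣ X ^ k * taylor 1 q := by
    have : q ∣ p * (X ^ k * taylor 1 q) := ⟨u * taylor 1 q + X ^ k * taylor 1 p, by linear_combination -e⟩
    exact hcop.symm.dvd_of_dvd_mul_left this
  have d2 : taylor 1 q ∣ X ^ k * q := by
    have : taylor 1 q ∣ taylor 1 p * (X ^ k * q) := ⟨X ^ k * p - u * q, by linear_combination e⟩
    exact hcop'.symm.dvd_of_dvd_mul_left this
  have s1 : ∀ a : ℂ, a ≠ 0 → q.eval a = 0 → q.eval (a + 1) = 0 := by
    intro a ha h0
    obtain ⟨r, hr⟩ := d1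
    have := congrArg (eval a) hr
    simp only [eval_mul, eval_pow, eval_X, h0, zero_mul, taylor_eval] at this
    rcases mul_eq_zero.mp this with h | h
    · exact absurd h (pow_ne_zero _ ha)
    · exact h
  have s2 : ∀ a : ℂ, a ≠ 0 → q.eval (a + 1) = 0 → q.eval a = 0 := by
    intro a ha h0
    obtain ⟨r, hr⟩ := d2
    have := congrArg (eval a) hr
    have h0' : (taylor 1 q).eval a = 0 := by
      rw [taylor_eval]; exact h0
    simp only [eval_mul, eval_pow, eval_X, h0', zero_mul] at this
    rcases mul_eq_zero.mp this with h | h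
    · exact absurd h (pow_ne_zero _ ha)
    · exact h
  have hinf : ∀ F : ℕ → ℂ, Function.Injective F → (∀ n, q.eval (F n) = 0) → False := by
    intro F hF h0
    refine (Set.infinite_range_of_injective hF) ((q.roots.toFinset.finite_toSet).subset ?_)
    rintro _ ⟨n, rfl⟩
    simpa [hq] using h0 n
  have e0 := congrArg (eval 0) e
  simp only [eval_mul, eval_pow, eval_X, zero_pow hk, zero_mul, taylor_eval] at e0
  rcases mul_eq_zero.mp e0 with h | h
  · exact hu h
  rcases mul_eq_zero.mp h with h | h
  · refine hinf (fun n => -(n : ℂ)) (fun a b hab => by simpa using hab) ?_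
    intro n
    induction n with
    | zero => simpa using h
    | succ n ih =>
      apply s2 _ (by rw [neg_ne_zero]; exact_mod_cast Nat.succ_ne_zero n)
      convert ih using 2; push_cast; ring
  · refine hinf (fun n => ((n + 1 : ℕ) : ℂ)) (fun a b hab => by simpa using hab) ?_
    intro n
    induction n with
    | zero => simpa using h
    | succ n ih =>
      have := s1 _ (by exact_mod_cast Nat.succ_ne_zero n) ih
      convert this using 2; push_cast; ring

noncomputable def gwb (k : ℕ) : RatFunc ℂ :=
  algebraMap ℂ[X] _ (C ((-1) ^ k * (k.factorial : ℂ))) / algebraMap ℂ[X] _ (X ^ (k + 1))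

theorem gwφ_b (k : ℕ) : gwφ (gwb k) =
    ((fun n : ℕ => (-1) ^ k * (k.factorial : ℂ) * ((n : ℂ) ^ (k + 1))⁻¹ : ℕ → ℂ) : Germ (atTop : Filter ℕ) ℂ) := by
  have hu := gwev_unit ⟨X ^ (k + 1), mem_nonZeroDivisors_of_ne_zero (pow_ne_zero _ X_ne_zero)⟩
  refine hu.mul_right_cancel ?_
  rw [← gwφ_alg, ← map_mul, gwb, div_mul_cancel₀ _ (by simp [RatFunc.X_ne_zero]), gwφ_alg, gwφ_alg, gwev_coe, gwev_coe]
  refine Germ.coe_eq.mpr ?_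
  filter_upwards [eventually_gt_atTop 0] with n hn
  have : (n : ℂ) ≠ 0 := by exact_mod_cast hn.ne'
  simp
  field_simp

theorem gw_no_relation (S : Finset ℕ) (c : ℕ → RatFunc ℂ) (j : ℕ) (g : RatFunc ℂ) (hj : j ∈ S)
    (hcj : c j ≠ 0) (hc : ∀ i, gwτ (c i) = c i) (h : ∑ i ∈ S, c i * gwb i = g - gwτ g) : False := by
  classical
  choose a ha using fun i => gw_const (c i) (hc i)
  have hne : (S.filter (fun i => a i ≠ 0)).Nonempty := by
    refine ⟨j, ?_⟩
    rw [Finset.mem_filter]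
    refine ⟨hj, fun h0 => hcj ?_⟩
    rw [ha, h0]; simp
  set J := (S.filter (fun i => a i ≠ 0)).max' hne with hJ
  have hJm := Finset.max'_mem _ hne
  rw [← hJ, Finset.mem_filter] at hJm
  have hle : ∀ i ∈ S, a i ≠ 0 → i ≤ J := fun i hi h0 =>
    Finset.le_max' _ _ (Finset.mem_filter.mpr ⟨hi, h0⟩)
  refine gw_pole (∑ i ∈ S, C (a i * ((-1) ^ i * (i.factorial : ℂ))) * X ^ (J - i)) ?_ (J + 1)
    (Nat.succ_ne_zero J) g ?_
  · rw [eval_finsetSum, Finset.sum_eq_single J]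
    · simp [hJm.2, Nat.factorial_ne_zero]
    · intro i hi hne
      by_cases h0 : a i = 0
      · simp [h0]
      · have := hle i hi h0
        have : J - i ≠ 0 := by omega
        simp [this]
    · intro h; exact absurd hJm.1 h
  · rw [← h, map_sum, Finset.mul_sum]
    refine Finset.sum_congr rfl fun i hi => ?_
    rw [ha i, gwb]
    by_cases h0 : a i = 0
    · simp [h0]
    · have hi := hle i hi h0
      have hX : algebraMap ℂ[X] (RatFunc ℂ) X ≠ 0 := by simp [RatFunc.X_ne_zero]
      have e : X ^ (J + 1) = (X : ℂ[X]) ^ (J - i) * X ^ (i + 1) := by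
        rw [← pow_add]; congr 1; omega
      rw [e]
      simp only [map_mul, map_pow]
      field_simp

end gwD

section gwF
open MvPolynomial Filter

theorem gw_eval_germ (y : ℕ → ℕ → ℂ) (Q : MvPolynomial (Option ℕ) ℂ) :
    eval₂ gwφ (fun k => ((y k : ℕ → ℂ) : Germ (atTop : Filter ℕ) ℂ))
      (map (algebraMap (Polynomial ℂ) (RatFunc ℂ)) (optionEquivRight ℂ ℕ Q)) =
    ((fun n : ℕ => eval (fun o : Option ℕ => o.elim (n : ℂ) (fun k => y k n)) Q : ℕ → ℂ) :
      Germ (atTop : Filter ℕ) ℂ) := by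
  induction Q using MvPolynomial.induction_on with
  | C a =>
    rw [optionEquivRight_C, map_C, eval₂_C, gwφ_alg, gwev_coe]
    simp
  | add p q hp hq =>
    rw [map_add, map_add, eval₂_add, hp, hq]
    simp only [map_add]
    rfl
  | mul_X p i hp =>
    rw [map_mul, map_mul, eval₂_mul, hp]
    simp only [map_mul, eval_X]
    cases i with
    | none =>
      rw [optionEquivRight_X_none, map_C, eval₂_C, gwφ_alg, gwev_coe]
      simp only [Polynomial.eval_X]
      rfl
    | some k =>
      rw [optionEquivRight_X_some, map_X, eval₂_X]
      rfl

theorem gw_final (y : ℕ → ℕ → ℂ)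
    (hy : ∀ k, ∀ᶠ n : ℕ in atTop,
      y k (n + 1) = y k n + (-1) ^ k * (k.factorial : ℂ) * ((n : ℂ) ^ (k + 1))⁻¹)
    (Q : MvPolynomial (Option ℕ) ℂ)
    (hQ : ∀ᶠ n : ℕ in atTop, eval (fun o : Option ℕ => o.elim (n : ℂ) (fun k => y k n)) Q = 0) :
    Q = 0 := by
  by_contra hne
  have hP : map (algebraMap (Polynomial ℂ) (RatFunc ℂ)) (optionEquivRight ℂ ℕ Q) ≠ 0 := by
    rw [Ne, map_eq_zero_iff _ (map_injective _ (RatFunc.algebraMap_injective ℂ)),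
      EmbeddingLike.map_eq_zero_iff]
    exact hne
  have hV : eval₂ gwφ (fun k => ((y k : ℕ → ℂ) : Germ (atTop : Filter ℕ) ℂ))
      (map (algebraMap (Polynomial ℂ) (RatFunc ℂ)) (optionEquivRight ℂ ℕ Q)) = 0 := by
    rw [gw_eval_germ]
    exact Germ.coe_eq.mpr hQ
  obtain ⟨S, c, j, g, hj, hcj, hc, h⟩ := gw_difference gwφ gwτ gwτM gw_compat gwb _ (fun k => by
    rw [gwτM_coe, gwφ_b]
    exact Germ.coe_eq.mpr (hy k)) _ hP hV
  exact gw_no_relation S c j g hj hcj hc h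

end gwF

section gwB
open Filter Topology

noncomputable def gwTay (w : ℂ) (f : ℂ → ℂ) : PowerSeries ℂ :=
  PowerSeries.mk (fun k => iteratedDeriv k f w / (k.factorial : ℂ))

theorem gwTay_congr {w : ℂ} {f g : ℂ → ℂ} (h : f =ᶠ[𝓝 w] g) : gwTay w f = gwTay w g := by
  ext k
  simp only [gwTay, PowerSeries.coeff_mk, h.iteratedDeriv_eq k]

theorem gwTay_add {w : ℂ} {f g : ℂ → ℂ} (hf : AnalyticAt ℂ f w) (hg : AnalyticAt ℂ g w) :
    gwTay w (fun z => f z + g z) = gwTay w f + gwTay w g := by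
  ext k
  simp only [gwTay, PowerSeries.coeff_mk, map_add]
  rw [iteratedDeriv_fun_add hf.contDiffAt hg.contDiffAt, add_div]

theorem gwTay_mul {w : ℂ} {f g : ℂ → ℂ} (hf : AnalyticAt ℂ f w) (hg : AnalyticAt ℂ g w) :
    gwTay w (fun z => f z * g z) = gwTay w f * gwTay w g := by
  ext k
  rw [PowerSeries.coeff_mul, Finset.Nat.sum_antidiagonal_eq_sum_range_succ_mk]
  simp only [gwTay, PowerSeries.coeff_mk]
  rw [iteratedDeriv_fun_mul hf.contDiffAt hg.contDiffAt, Finset.sum_div]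
  refine Finset.sum_congr rfl fun i hi => ?_
  have hi' : i ≤ k := Nat.lt_succ_iff.mp (Finset.mem_range.mp hi)
  rw [Nat.cast_choose ℂ hi']
  have h1 : (k.factorial : ℂ) ≠ 0 := by exact_mod_cast k.factorial_ne_zero
  have h2 : (i.factorial : ℂ) ≠ 0 := by exact_mod_cast i.factorial_ne_zero
  have h3 : ((k - i).factorial : ℂ) ≠ 0 := by exact_mod_cast (k - i).factorial_ne_zero
  field_simp

theorem gwTay_const (w c : ℂ) : gwTay w (fun _ => c) = algebraMap ℂ _ c := by
  ext k
  simp only [gwTay, PowerSeries.coeff_mk, iteratedDeriv_const, PowerSeries.algebraMap_apply,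
    PowerSeries.coeff_C]
  split_ifs with h <;> simp [h]

theorem gwTay_id (w : ℂ) : gwTay w (fun z => z) = PowerSeries.X + PowerSeries.C w := by
  ext k
  rcases k with _ | _ | k
  · simp [gwTay]
  · simp [gwTay, iteratedDeriv_one, PowerSeries.coeff_X, PowerSeries.coeff_C]
  · simp [gwTay, iteratedDeriv_succ', PowerSeries.coeff_X, PowerSeries.coeff_C]

theorem gwTay_deriv (w : ℂ) (f : ℂ → ℂ) :
    gwTay w (deriv f) = PowerSeries.derivative ℂ (gwTay w f) := by
  ext k
  rw [PowerSeries.coeff_derivative]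
  simp only [gwTay, PowerSeries.coeff_mk]
  rw [iteratedDeriv_succ', Nat.factorial_succ]
  have h1 : (k.factorial : ℂ) ≠ 0 := by exact_mod_cast k.factorial_ne_zero
  have h2 : (k : ℂ) + 1 ≠ 0 := by exact_mod_cast Nat.succ_ne_zero k
  push_cast
  field_simp

theorem gwTay_iter (w : ℂ) (f : ℂ → ℂ) (k : ℕ) :
    gwTay w (iteratedDeriv k f) = (PowerSeries.derivative ℂ)^[k] (gwTay w f) := by
  induction k with
  | zero => simp
  | succ k ih => rw [iteratedDeriv_succ, gwTay_deriv, ih, Function.iterate_succ_apply']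

theorem gwTay_eq_zero {w : ℂ} {f : ℂ → ℂ} (hf : AnalyticAt ℂ f w) (h : gwTay w f = 0) :
    f =ᶠ[𝓝 w] 0 := by
  have h1 := hf.hasFPowerSeriesAt
  have h2 : (fun n => iteratedDeriv n f w / (n.factorial : ℂ)) = 0 := by
    funext k
    have := congrArg (PowerSeries.coeff k) h
    simpa [gwTay] using this
  rw [h2] at h1
  have h3 : FormalMultilinearSeries.ofScalars ℂ (0 : ℕ → ℂ) = 0 := by
    ext; simp [FormalMultilinearSeries.ofScalars]
  rw [h3] at h1
  exact h1.eventually_eq_zero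

theorem gwTay_shift (w c : ℂ) (f : ℂ → ℂ) : gwTay w (fun z => f (z - c)) = gwTay (w - c) f := by
  ext k
  simp only [gwTay, PowerSeries.coeff_mk, iteratedDeriv_comp_sub_const]

theorem gw_an_iter {w : ℂ} {f : ℂ → ℂ} (hf : AnalyticAt ℂ f w) (k : ℕ) :
    AnalyticAt ℂ (iteratedDeriv k f) w := by
  rw [iteratedDeriv_eq_iterate]
  exact hf.iterated_deriv k

theorem gw_an_poly {σ : Type*} {w : ℂ} (g : σ → ℂ → ℂ) (hg : ∀ i, AnalyticAt ℂ (g i) w)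
    (P : MvPolynomial σ ℂ) : AnalyticAt ℂ (fun z => MvPolynomial.eval (fun i => g i z) P) w ∧
      gwTay w (fun z => MvPolynomial.eval (fun i => g i z) P) =
        MvPolynomial.aeval (fun i => gwTay w (g i)) P := by
  induction P using MvPolynomial.induction_on with
  | C a =>
    simp only [MvPolynomial.eval_C, MvPolynomial.aeval_C]
    exact ⟨analyticAt_const, gwTay_const w a⟩
  | add p q hp hq =>
    simp only [map_add]
    exact ⟨hp.1.add hq.1, by rw [gwTay_add hp.1 hq.1, hp.2, hq.2]⟩
  | mul_X p i hp =>
    simp only [map_mul, MvPolynomial.eval_X, MvPolynomial.aeval_X]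
    exact ⟨hp.1.mul (hg i), by rw [gwTay_mul hp.1 (hg i), hp.2]⟩

theorem gw_trans (w : ℂ) : Transcendental ℂ (PowerSeries.X + PowerSeries.C w : PowerSeries ℂ) := by
  rw [transcendental_iff]
  intro p hp
  have h1 : (PowerSeries.X + PowerSeries.C w : PowerSeries ℂ) =
      Polynomial.coeToPowerSeries.algHom ℂ (Polynomial.X + Polynomial.C w) := by
    simp [Polynomial.coeToPowerSeries.algHom_apply]
  rw [h1, Polynomial.aeval_algHom_apply, Polynomial.coeToPowerSeries.algHom_apply] at hp
  have h2 : Polynomial.aeval (Polynomial.X + Polynomial.C w) p = Polynomial.taylor w p := by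
    rw [Polynomial.taylor_apply]; rfl
  rw [h2] at hp
  have h3 : Polynomial.taylor w p = 0 := by
    apply Polynomial.coe_injective ℂ
    simpa using hp
  exact (Polynomial.taylor_injective w) (by simpa using h3)

end gwB

section gwG
open Filter Topology

theorem gw_diffalg_tay (f : ℂ → ℂ) (hda : DifferentiallyAlgebraic f) (w : ℂ)
    (hf : AnalyticAt ℂ f w) : ∃ s : Set (PowerSeries ℂ), s.Finite ∧
      (PowerSeries.X + PowerSeries.C w : PowerSeries ℂ) ∈ s ∧
      IsAlgebraic (Algebra.adjoin ℂ s) (gwTay w f) ∧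
      ∀ b ∈ s, IsAlgebraic (Algebra.adjoin ℂ s) (PowerSeries.derivative ℂ b) := by
  obtain ⟨n, P, hP, h⟩ := hda
  refine gw_diffalg (PowerSeries.derivative ℂ) (PowerSeries.X + PowerSeries.C w) (gwTay w f)
    (gw_trans w) (by simp) (fun k => gwTay w (if k = 0 then (fun z => z) else iteratedDeriv (k - 1) f))
    (by simp [gwTay_id]) (fun k => by simp [gwTay_iter]) (n + 2) ?_
  intro hind
  have h1 := hind.comp (fun i : Fin (n + 2) => (⟨i.val, i.isLt⟩ : Set.Iio (n + 2)))
    (fun a b hab => Fin.ext (congrArg Subtype.val hab))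
  apply hP
  rw [algebraicIndependent_iff] at h1
  apply h1
  have h2 := gw_an_poly (w := w)
    (fun (i : Fin (n + 2)) => if i.val = 0 then (fun z => z) else iteratedDeriv (i.val - 1) f)
    (fun i => by
      split_ifs
      · exact analyticAt_id
      · exact gw_an_iter hf _) P
  refine Eq.trans h2.2.symm ?_
  have h3 : (fun z => MvPolynomial.eval (fun i : Fin (n + 2) =>
      (if i.val = 0 then (fun z => z) else iteratedDeriv (i.val - 1) f : ℂ → ℂ) z) P) =ᶠ[𝓝 w]
      (fun _ => 0) := by
    filter_upwards [hf.eventually_analyticAt] with z hz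
    rw [← h z hz]
    congr 2
    funext i
    split_ifs <;> rfl
  rw [gwTay_congr h3, gwTay_const, map_zero]

theorem gw_gamma_an {z : ℂ} (hz : 0 < z.re) : AnalyticAt ℂ Complex.Gamma z := by
  have ho : IsOpen {z : ℂ | 0 < z.re} := isOpen_lt continuous_const Complex.continuous_re
  refine DifferentiableOn.analyticAt (s := {z : ℂ | 0 < z.re}) ?_ (ho.mem_nhds hz)
  intro u hu
  refine (Complex.differentiableAt_Gamma u fun m hm => ?_).differentiableWithinAt
  replace hu : 0 < u.re := hu
  rw [hm] at hu
  simp at hu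
  exact absurd hu (not_lt.mpr (Nat.cast_nonneg m))

theorem gw_digamma_an {z : ℂ} (hz : 0 < z.re) : AnalyticAt ℂ Complex.digamma z := by
  have := gw_gamma_an hz
  exact this.deriv.div this (Complex.Gamma_ne_zero_of_re_pos hz)

theorem gw_digamma_rec (k : ℕ) {z : ℂ} (hz : 0 < z.re) :
    iteratedDeriv k Complex.digamma (z + 1) = iteratedDeriv k Complex.digamma z +
      (-1) ^ k * (k.factorial : ℂ) * (z ^ (k + 1))⁻¹ := by
  have ho : IsOpen {z : ℂ | 0 < z.re} := isOpen_lt continuous_const Complex.continuous_re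
  have hz0 : z ≠ 0 := by rintro rfl; simp at hz
  have h1 : (fun u => Complex.digamma (u + 1)) =ᶠ[𝓝 z] fun u => Complex.digamma u + u⁻¹ := by
    filter_upwards [ho.mem_nhds hz] with u hu
    refine Complex.digamma_apply_add_one u fun m hm => ?_
    replace hu : 0 < u.re := hu
    rw [hm] at hu
    simp at hu
    exact absurd hu (not_lt.mpr (Nat.cast_nonneg m))
  have hinv : AnalyticAt ℂ (fun u : ℂ => u⁻¹) z := analyticAt_id.inv hz0
  have h2 := h1.iteratedDeriv_eq k
  rw [iteratedDeriv_comp_add_const,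
    iteratedDeriv_fun_add (gw_digamma_an hz).contDiffAt hinv.contDiffAt] at h2
  refine Eq.trans h2 ?_
  congr 1
  have h3 := iter_deriv_inv k z
  rw [← iteratedDeriv_eq_iterate] at h3
  refine h3.trans ?_
  congr 1
  rw [← zpow_natCast, ← zpow_neg]
  congr 1
  push_cast; ring

theorem gw_indep (Q : MvPolynomial (Option ℕ) ℂ) (w : ℂ) (hw : 0 < w.re)
    (h : MvPolynomial.aeval (fun o : Option ℕ => gwTay w
      (o.elim (fun z => z) (fun k => iteratedDeriv k Complex.digamma))) Q = 0) : Q = 0 := by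
  have han : ∀ z : ℂ, 0 < z.re → ∀ o : Option ℕ, AnalyticAt ℂ
      (o.elim (fun z => z) (fun k => iteratedDeriv k Complex.digamma) : ℂ → ℂ) z := by
    intro z hz o
    cases o with
    | none => exact analyticAt_id
    | some k => exact gw_an_iter (gw_digamma_an hz) k
  have h1 := gw_an_poly (w := w) _ (han w hw) Q
  rw [h] at h1
  have h2 := gwTay_eq_zero h1.1 h1.2
  have h3 : AnalyticOnNhd ℂ (fun z => MvPolynomial.eval (fun o : Option ℕ =>
      (o.elim (fun z => z) (fun k => iteratedDeriv k Complex.digamma) : ℂ → ℂ) z) Q)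
      {z : ℂ | 0 < z.re} := fun z hz => (gw_an_poly (w := z) _ (han z hz) Q).1
  have h4 := h3.eqOn_zero_of_preconnected_of_eventuallyEq_zero
    (convex_halfSpace_re_gt 0).isPreconnected hw h2
  refine gw_final (fun k n => iteratedDeriv k Complex.digamma n) ?_ Q ?_
  · intro k
    filter_upwards [eventually_gt_atTop 0] with n hn
    have := gw_digamma_rec k (z := (n : ℂ)) (by simpa using hn)
    push_cast
    exact this
  · filter_upwards [eventually_gt_atTop 0] with n hn
    have h5 := h4 (show (n : ℂ) ∈ {z : ℂ | 0 < z.re} by simpa using hn)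
    refine Eq.trans ?_ h5
    congr 2
    funext o
    cases o <;> rfl

end gwG

/-- Fix a real `x₀ > 0`. Every function meromorphic on ℂ satisfying the
Gautschi–Waldvogel functional equation `f α = x₀ * f (α-1) + Γ α` (wherever all three
terms are analytic) is differentially transcendental. -/
theorem gautschiWaldvogel_diffTranscendental (x₀ : ℝ) (hx₀ : 0 < x₀)
    (f : ℂ → ℂ) (hmero : MeromorphicOn f Set.univ)
    (hfe : ∀ α : ℂ, AnalyticAt ℂ f α → AnalyticAt ℂ f (α - 1) →
      AnalyticAt ℂ Complex.Gamma α → f α = (x₀ : ℂ) * f (α - 1) + Complex.Gamma α) :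
    ¬ DifferentiallyAlgebraic f := by
  intro hda
  obtain ⟨w, hw1, hw2, hw3⟩ : ∃ w : ℂ, AnalyticAt ℂ f w ∧ AnalyticAt ℂ f (w - 1) ∧ 0 < w.re := by
    have e1 := (hmero 2 trivial).eventually_analyticAt
    have e2 : ∀ᶠ y in nhdsWithin (2 : ℂ) {2}ᶜ, AnalyticAt ℂ f (y - 1) := by
      have ht : Filter.Tendsto (fun y : ℂ => y - 1) (nhdsWithin 2 {2}ᶜ) (nhdsWithin 1 {1}ᶜ) := by
        refine tendsto_nhdsWithin_iff.mpr ⟨?_, ?_⟩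
        · have : Filter.Tendsto (fun y : ℂ => y - 1) (nhds 2) (nhds (2 - 1)) :=
            (continuous_id.sub continuous_const).tendsto 2
          rw [show (2 : ℂ) - 1 = 1 by norm_num] at this
          exact this.mono_left nhdsWithin_le_nhds
        · filter_upwards [self_mem_nhdsWithin] with y hy hy1
          exact hy (by
            have : y - 1 = 1 := hy1
            rw [Set.mem_singleton_iff]
            linear_combination this)
      exact ht.eventually (hmero 1 trivial).eventually_analyticAt
    have e3 : ∀ᶠ y in nhdsWithin (2 : ℂ) {2}ᶜ, 0 < y.re :=
      nhdsWithin_le_nhds ((isOpen_lt continuous_const Complex.continuous_re).mem_nhds (by simp))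
    exact (e1.and (e2.and e3)).exists
  have hG := gw_gamma_an hw3
  have hsh : AnalyticAt ℂ (fun z : ℂ => f (z - 1)) w :=
    hw2.comp_of_eq (analyticAt_id.sub analyticAt_const) rfl
  have hfe' : f =ᶠ[nhds w] fun z => (x₀ : ℂ) * f (z - 1) + Complex.Gamma z := by
    have ht : Filter.Tendsto (fun y : ℂ => y - 1) (nhds w) (nhds (w - 1)) :=
      (continuous_id.sub continuous_const).tendsto w
    filter_upwards [hw1.eventually_analyticAt, ht.eventually hw2.eventually_analyticAt,
      hG.eventually_analyticAt] with z h1 h2 h3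
    exact hfe z h1 h2 h3
  have hT := gwTay_congr hfe'
  have hxs : AnalyticAt ℂ (fun z : ℂ => (x₀ : ℂ) * f (z - 1)) w := analyticAt_const.mul hsh
  rw [gwTay_add hxs hG, gwTay_mul analyticAt_const hsh, gwTay_const,
    gwTay_shift] at hT
  obtain ⟨s1, f1, m1, a1, c1⟩ := gw_diffalg_tay f hda w hw1
  obtain ⟨s2, f2, m2, a2, c2⟩ := gw_diffalg_tay f hda (w - 1) hw2
  have hcl : ∀ b, IsAlgebraic (Algebra.adjoin ℂ (s1 ∪ s2)) b →
      IsAlgebraic (Algebra.adjoin ℂ (s1 ∪ s2)) (PowerSeries.derivative ℂ b) := by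
    refine fun b hb => gw_closed _ _ ?_ b hb
    rintro a (ha | ha)
    · exact gw_alg_mono Set.subset_union_left (c1 a ha)
    · exact gw_alg_mono Set.subset_union_right (c2 a ha)
  have g1 := gw_alg_mono (t := s1 ∪ s2) Set.subset_union_left a1
  have g2 := gw_alg_mono (t := s1 ∪ s2) Set.subset_union_right a2
  have gx : IsAlgebraic (Algebra.adjoin ℂ (s1 ∪ s2)) (algebraMap ℂ (PowerSeries ℂ) (x₀ : ℂ)) := by
    have := isAlgebraic_algebraMap (R := Algebra.adjoin ℂ (s1 ∪ s2)) (A := PowerSeries ℂ)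
      (algebraMap ℂ _ (x₀ : ℂ))
    exact this
  have gG : IsAlgebraic (Algebra.adjoin ℂ (s1 ∪ s2)) (gwTay w Complex.Gamma) := by
    have : gwTay w Complex.Gamma = gwTay w f - algebraMap ℂ (PowerSeries ℂ) (x₀ : ℂ) * gwTay (w - 1) f := by
      rw [hT]; ring
    rw [this]
    exact g1.sub (gx.mul g2)
  have hG0 : gwTay w Complex.Gamma ≠ 0 := fun h0 => by
    have := (gwTay_eq_zero hG h0).eq_of_nhds
    exact Complex.Gamma_ne_zero_of_re_pos hw3 this
  have hprod : gwTay w Complex.Gamma * gwTay w Complex.digamma =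
      PowerSeries.derivative ℂ (gwTay w Complex.Gamma) := by
    rw [← gwTay_mul hG (gw_digamma_an hw3), ← gwTay_deriv]
    apply gwTay_congr
    have ho : IsOpen {z : ℂ | 0 < z.re} := isOpen_lt continuous_const Complex.continuous_re
    filter_upwards [ho.mem_nhds hw3] with z hz
    rw [Complex.digamma, logDeriv_apply]
    exact mul_div_cancel₀ _ (Complex.Gamma_ne_zero_of_re_pos hz)
  have gΨ : IsAlgebraic (Algebra.adjoin ℂ (s1 ∪ s2)) (gwTay w Complex.digamma) := by
    have h := hcl _ gG
    rw [← hprod] at h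
    exact gG.of_mul (mem_nonZeroDivisors_of_ne_zero hG0) h
  have gk : ∀ k, IsAlgebraic (Algebra.adjoin ℂ (s1 ∪ s2)) (gwTay w (iteratedDeriv k Complex.digamma)) := by
    intro k
    rw [gwTay_iter]
    induction k with
    | zero => exact gΨ
    | succ k ih => rw [Function.iterate_succ_apply']; exact hcl _ ih
  refine gw_finite (s1 ∪ s2) (f1.union f2) (fun o : Option ℕ => gwTay w
      (o.elim (fun z => z) (fun k => iteratedDeriv k Complex.digamma))) ?_ ?_
  · intro o
    cases o with
    | none =>
      refine gw_alg_of_mem (Algebra.subset_adjoin ?_)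
      simp only [Option.elim_none, gwTay_id]
      exact Or.inl m1
    | some k => exact gk k
  · rw [algebraicIndependent_iff]
    exact fun Q hQ => gw_indep Q w hw3 hQ
end
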